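/- arXiv:1403.7609 — 2 statements merged into one kernel-verified Lean document; each statement's English description precedes it below -/
import Mathlib

section
/- (W-trick.) Let k ≥ 1 and let F(X) = ∏_{i=1}^k (a_i X + b_i) with a_i nonzero integers and b_i integers, such that F is admissible and Δ(F) ≠ 0. There exist a constant c(F) > 0 and a natural number N_0(F) such that the following holds for all N ≥ N_0(F). Set z = (log N)/3 and M = ∏_{p ≤ z, p prime} p. For every A ⊆ S_F(N, N^{1/(4k+1)}) with |A| = δ·|S_F(N, N^{1/(4k+1)})| and δ > 0, there exists b_0 ∈ {0, 1, …, M−1} such that gcd(F(b_0), M) = 1 and |{n ∈ A : n ≡ b_0 (mod M)}| ≥ c(F)·δ·(log log N)^k·(log N)^{−k}·N/M. -/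
/-- The primorial of a real number `z`: the product of all primes `p ≤ z`. -/
noncomputable def primor (z : ℝ) : ℕ :=
  ∏ p ∈ (Finset.range (⌊z⌋₊ + 1)).filter Nat.Prime, p

/-- `S_F(N, z)`: the set of natural numbers `n ≤ N` with `gcd(F(n), P(z)) = 1`. -/
noncomputable def SFset (F : ℤ → ℤ) (N : ℕ) (z : ℝ) : Finset ℕ :=
  (Finset.Icc 1 N).filter (fun n => Int.gcd (F n) (primor z) = 1)

/-! The W-trick is a pigeonhole argument over the residue classes modulo `M` on which `F` is coprime
to `M`. By the Chinese remainder theorem there are `∏ p ≤ z, (p - ν p)` such classes, where `ν p` is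
the number of roots of `F` modulo `p`; since `ν p = k` for all `p ∤ Δ(F)`, Mertens' theorem bounds
this by `O(M / (log z) ^ k)`. Every element of `A` lies in one of these classes, because
`z ≤ N ^ (1 / (4 * k + 1))`, so some class contains `≫ |A| (log z) ^ k / M` elements of `A`.

It remains to bound `S_F(N, N ^ (1 / (4 * k + 1)))` from below by `≫ N / (log N) ^ k`. This follows
from Brun's sieve up to level `n = N ^ (1 / (4 * k + 1))`, applied to a progression `r + W * m` on
which `F` has no prime factor up to a fixed `w`. Restricting the inclusion-exclusion sum to sets of
primes `p₁ > p₂ > ⋯` with `p₂ᵢ ≤ n ^ q ^ i` for all `i ≥ 1` can only lower its value, and keeps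
every modulus below `n ^ τ` with `τ = (1 + q) / (1 - q)`. A ratio `q` close enough to `1` for the
loss in the main term to be bounded is still compatible with `τ < 4 * k + 1`. -/

section Mertens

open Finset
open Real (log)

theorem log_factorial_eq_sum_prime (n : ℕ) :
    log n.factorial = ∑ p ∈ Ioc 0 n with p.Prime, n.factorial.factorization p * log p := by
  rw [Real.log_nat_eq_sum_factorization, Finsupp.sum]
  refine sum_subset (fun p hp => ?_) (fun p _ hp => ?_)
  · rw [Nat.support_factorization, Nat.mem_primeFactors] at hp
    exact mem_filter.2 ⟨mem_Ioc.2 ⟨hp.1.pos, hp.1.dvd_factorial.1 hp.2.1⟩, hp.1⟩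
  · rw [Finsupp.notMem_support_iff.1 hp, Nat.cast_zero, zero_mul]

theorem div_sub_one_le_factorization_factorial {n p : ℕ} (hp : p.Prime) (hpn : p ≤ n) :
    (n : ℝ) / p - 1 ≤ n.factorial.factorization p := by
  have hdiv : n / p ≤ n.factorial.factorization p := by
    have hmem : 1 ∈ Ico 1 (Nat.log p n + 1) :=
      mem_Ico.2 ⟨le_rfl, Nat.lt_add_of_pos_left (Nat.log_pos hp.one_lt hpn)⟩
    rw [Nat.factorization_factorial hp (Nat.lt_add_one (Nat.log p n))]
    simpa only [pow_one] using
      single_le_sum (f := fun i => n / p ^ i) (fun _ _ => Nat.zero_le _) hmem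
  have hfloor : (n : ℝ) / p < (n / p : ℕ) + 1 := by
    rw [← Nat.floor_div_eq_div (K := ℝ)]
    exact Nat.lt_floor_add_one _
  have : ((n / p : ℕ) : ℝ) ≤ n.factorial.factorization p := by exact_mod_cast hdiv
  linarith

theorem factorization_factorial_le_div_sub_one {n p : ℕ} (hp : p.Prime) :
    (n.factorial.factorization p : ℝ) ≤ n / ((p : ℝ) - 1) := by
  refine (Nat.cast_le.2 (Nat.factorization_factorial_le_div_pred hp n)).trans
    (Nat.cast_div_le.trans_eq ?_)
  rw [Nat.cast_sub hp.one_lt.le, Nat.cast_one]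

theorem sum_log_div_le_log_add_log_four {n : ℕ} (hn : 1 ≤ n) :
    ∑ p ∈ Ioc 0 n with p.Prime, log p / p ≤ log n + log 4 := by
  have hn0 : (0 : ℝ) < n := by exact_mod_cast hn
  have hsum : n * (∑ p ∈ Ioc 0 n with p.Prime, log p / p) - Chebyshev.theta n
      ≤ log n.factorial := by
    rw [log_factorial_eq_sum_prime, Chebyshev.theta, Nat.floor_natCast, mul_sum,
      ← sum_sub_distrib]
    refine sum_le_sum fun p hp => ?_
    simp only [mem_filter, mem_Ioc] at hp
    calc n * (log p / p) - log p = ((n : ℝ) / p - 1) * log p := by ring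
      _ ≤ _ := mul_le_mul_of_nonneg_right
        (div_sub_one_le_factorization_factorial hp.2 hp.1.2) (Real.log_natCast_nonneg p)
  have hfact : log n.factorial ≤ n * log n := by
    rw [← Real.log_pow]
    exact Real.log_le_log (by exact_mod_cast n.factorial_pos)
      (by exact_mod_cast Nat.factorial_le_pow n)
  have htheta := Chebyshev.theta_le_log4_mul_x hn0.le
  refine le_of_mul_le_mul_left ?_ hn0
  linarith

theorem log_div_mul_sub_one_le_rpow {x : ℝ} (hx : 2 ≤ x) :
    log x / (x * (x - 1)) ≤ 4 * (1 / x ^ (3 / 2 : ℝ)) := by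
  have hx0 : 0 < x := by linarith
  have hlog : log x ≤ 2 * x ^ (1 / 2 : ℝ) := by
    have := Real.log_le_rpow_div hx0.le (ε := 1 / 2) (by norm_num)
    linarith
  have hmul : x ^ (1 / 2 : ℝ) * x ^ (3 / 2 : ℝ) = x * x := by
    rw [← Real.rpow_add hx0, ← sq, ← Real.rpow_natCast]
    norm_num
  rw [mul_one_div, div_le_div_iff₀ (by nlinarith) (by positivity)]
  calc log x * x ^ (3 / 2 : ℝ) ≤ 2 * x ^ (1 / 2 : ℝ) * x ^ (3 / 2 : ℝ) := by gcongr
    _ = 2 * (x * x) := by rw [mul_assoc, hmul]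
    _ ≤ 4 * (x * (x - 1)) := by nlinarith

theorem exists_sum_log_div_mul_sub_one_le :
    ∃ C : ℝ, ∀ s : Finset ℕ, ∑ p ∈ s with p.Prime, log p / ((p : ℝ) * (p - 1)) ≤ C := by
  have hsummable : Summable fun m : ℕ => 4 * (1 / (m : ℝ) ^ (3 / 2 : ℝ)) :=
    (Real.summable_one_div_nat_rpow.2 (by norm_num)).mul_left 4
  refine ⟨∑' m : ℕ, 4 * (1 / (m : ℝ) ^ (3 / 2 : ℝ)), fun s => ?_⟩
  refine (sum_le_sum fun p hp => ?_).trans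
    (hsummable.sum_le_tsum (s.filter Nat.Prime) fun m _ => by positivity)
  exact log_div_mul_sub_one_le_rpow (by exact_mod_cast (mem_filter.1 hp).2.two_le)

theorem exists_log_le_sum_log_div_add :
    ∃ C : ℝ, ∀ n : ℕ, 1 ≤ n → log n ≤ ∑ p ∈ Ioc 0 n with p.Prime, log p / p + C := by
  obtain ⟨C, hC⟩ := exists_sum_log_div_mul_sub_one_le
  refine ⟨C + 1, fun n hn => ?_⟩
  have hn0 : (0 : ℝ) < n := by exact_mod_cast hn
  have hfact : log n.factorial ≤ n * (∑ p ∈ Ioc 0 n with p.Prime, log p / p + C) := by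
    refine le_trans ?_ (mul_le_mul_of_nonneg_left (add_le_add_right (hC (Ioc 0 n)) _) hn0.le)
    rw [log_factorial_eq_sum_prime, ← sum_add_distrib, mul_sum]
    refine sum_le_sum fun p hp => ?_
    have hp := (mem_filter.1 hp).2
    have hp1 : (p : ℝ) - 1 ≠ 0 := by
      have : (2 : ℝ) ≤ p := by exact_mod_cast hp.two_le
      linarith
    have hp0 : (p : ℝ) ≠ 0 := by exact_mod_cast hp.ne_zero
    calc n.factorial.factorization p * log p ≤ n / ((p : ℝ) - 1) * log p :=
          mul_le_mul_of_nonneg_right (factorization_factorial_le_div_sub_one hp)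
            (Real.log_natCast_nonneg p)
      _ = n * (log p / p + log p / ((p : ℝ) * (p - 1))) := by field_simp; ring
  have hstirling := Stirling.le_log_factorial_stirling (n := n) (by omega)
  have hlog : 0 ≤ log n := Real.log_natCast_nonneg n
  have hpi : 0 ≤ log (2 * Real.pi) := Real.log_nonneg (by linarith [Real.pi_gt_three])
  refine le_of_mul_le_mul_left ?_ hn0
  linarith

theorem exists_abs_sum_log_div_sub_log_le :
    ∃ C : ℝ, ∀ n : ℕ, 1 ≤ n → |∑ p ∈ Ioc 0 n with p.Prime, log p / p - log n| ≤ C := by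
  obtain ⟨C, hC⟩ := exists_log_le_sum_log_div_add
  refine ⟨max C (log 4), fun n hn => abs_le.2 ⟨?_, ?_⟩⟩
  · linarith [hC n hn, le_max_left C (log 4)]
  · linarith [sum_log_div_le_log_add_log_four hn, le_max_right C (log 4)]

theorem abs_partial_summation_step_le {x y e f C : ℝ} (hx : 0 < x) (hxy : x ≤ y)
    (hyx : y ≤ x + 1) (he : |e| ≤ C) :
    |(y - x + (f - e)) / y - (log y - log x) - (f / y - e / x)| ≤ (1 + C) * (1 / x - 1 / y) := by
  have hy : 0 < y := hx.trans_le hxy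
  have hinv : 0 ≤ 1 / x - 1 / y := sub_nonneg.2 (one_div_le_one_div_of_le hx hxy)
  have hlog_ge : 1 - x / y ≤ log y - log x := by
    have := Real.log_le_sub_one_of_pos (div_pos hx hy)
    rw [Real.log_div hx.ne' hy.ne'] at this
    linarith
  have hlog_le : log y - log x ≤ y / x - 1 := by
    have := Real.log_le_sub_one_of_pos (div_pos hy hx)
    rwa [Real.log_div hy.ne' hx.ne'] at this
  have hgap : (y / x - 1) - (1 - x / y) ≤ 1 / x - 1 / y := by
    calc (y / x - 1) - (1 - x / y) = (y - x) * (1 / x - 1 / y) := by field_simp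
      _ ≤ 1 * (1 / x - 1 / y) := mul_le_mul_of_nonneg_right (by linarith) hinv
      _ = _ := one_mul _
  have hlog : |(1 - x / y) - (log y - log x)| ≤ 1 / x - 1 / y := abs_le.2 ⟨by linarith, by linarith⟩
  have herr : |e * (1 / x - 1 / y)| ≤ C * (1 / x - 1 / y) := by
    rw [abs_mul, abs_of_nonneg hinv]
    exact mul_le_mul_of_nonneg_right he hinv
  calc _ = |((1 - x / y) - (log y - log x)) + e * (1 / x - 1 / y)| := by
        congr 1
        field_simp
        ring
    _ ≤ _ := (abs_add_le _ _).trans (by linarith)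

theorem log_natCast_succ_le {n : ℕ} (hn : 1 ≤ n) : log (n + 1 : ℕ) ≤ log n + 1 := by
  have hn₀ : (0 : ℝ) < n := by exact_mod_cast hn
  have hlog := Real.log_le_sub_one_of_pos (x := ((n + 1 : ℕ) : ℝ) / n) (by positivity)
  rw [Real.log_div (by positivity) hn₀.ne'] at hlog
  have hratio : ((n + 1 : ℕ) : ℝ) / n ≤ 2 := by
    rw [div_le_iff₀ hn₀]
    norm_cast
    omega
  linarith

theorem abs_sum_div_log_sub_le {a : ℕ → ℝ} {C : ℝ}
    (hC : ∀ n, 1 ≤ n → |∑ m ∈ Ioc 0 n, a m - log n| ≤ C) {u n : ℕ} (hu : 2 ≤ u) (hun : u ≤ n) :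
    |∑ m ∈ Ioc u n, a m / log m - (log (log n) - log (log u))| ≤ (2 * C + 1) / log u := by
  set e : ℕ → ℝ := fun n => ∑ m ∈ Ioc 0 n, a m - log n with he
  have hpos : ∀ m : ℕ, u ≤ m → 0 < log m := fun m hm => Real.log_pos (by norm_cast; omega)
  have htelescope : |∑ m ∈ Ioc u n, a m / log m - (log (log n) - log (log u))
      - (e n / log n - e u / log u)| ≤ (1 + C) * (1 / log u - 1 / log n) := by
    induction n, hun using Nat.le_induction with
    | base => simp
    | succ n hun ih =>
      have hmono : log n ≤ log (n + 1 : ℕ) :=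
        Real.log_le_log (by norm_cast; omega) (by norm_num)
      have hterm := abs_partial_summation_step_le (f := e (n + 1)) (hpos n hun) hmono
        (log_natCast_succ_le (by omega)) (hC n (by omega))
      have ha : a (n + 1) = log (n + 1 : ℕ) - log n + (e (n + 1) - e n) := by
        simp only [he, sum_Ioc_succ_top (Nat.zero_le n)]
        ring
      rw [← ha] at hterm
      rw [sum_Ioc_succ_top hun]
      calc _ = |(∑ m ∈ Ioc u n, a m / log m - (log (log n) - log (log u))
              - (e n / log n - e u / log u)) + (a (n + 1) / log (n + 1 : ℕ)
              - (log (log (n + 1 : ℕ)) - log (log n))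
              - (e (n + 1) / log (n + 1 : ℕ) - e n / log n))| := congrArg _ (by ring)
        _ ≤ _ := (abs_add_le _ _).trans (add_le_add ih hterm)
        _ = _ := by ring
  have hbound : ∀ m : ℕ, u ≤ m → |e m / log m| ≤ C / log m := fun m hm => by
    rw [abs_div, abs_of_pos (hpos m hm)]
    exact div_le_div_of_nonneg_right (hC m (by omega)) (hpos m hm).le
  have h₁ := abs_le.1 htelescope
  have h₂ := abs_le.1 (hbound n hun)
  have h₃ := abs_le.1 (hbound u le_rfl)
  have h₄ : 0 < 1 / log n := one_div_pos.2 (hpos n hun)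
  have h₅ : (2 * C + 1) / log u = (1 + C) * (1 / log u) + C / log u := by ring
  have h₆ : C / log n = C * (1 / log n) := by ring
  rw [abs_le]
  constructor <;> linarith [h₁.1, h₁.2]

theorem log_le_two_mul_log_floor {u : ℝ} (hu : 2 ≤ u) : log u ≤ 2 * log ⌊u⌋₊ := by
  have hfloor : (2 : ℝ) ≤ ⌊u⌋₊ := by exact_mod_cast Nat.le_floor (by exact_mod_cast hu)
  calc log u ≤ log ((⌊u⌋₊ : ℝ) ^ 2) :=
        Real.log_le_log (by linarith) (by nlinarith [Nat.lt_floor_add_one u])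
    _ = 2 * log ⌊u⌋₊ := by rw [Real.log_pow, Nat.cast_ofNat]

theorem abs_log_log_sub_log_log_floor_le {u : ℝ} (hu : 2 ≤ u) :
    |log (log u) - log (log ⌊u⌋₊)| ≤ 2 / log u := by
  have hfloor : (2 : ℝ) ≤ ⌊u⌋₊ := by exact_mod_cast Nat.le_floor (by exact_mod_cast hu)
  have hle : (⌊u⌋₊ : ℝ) ≤ u := Nat.floor_le (by linarith)
  have hpos : 0 < log ⌊u⌋₊ := Real.log_pos (by linarith)
  have hmono : log ⌊u⌋₊ ≤ log u := Real.log_le_log (by linarith) hle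
  have hstep : log u ≤ log ⌊u⌋₊ + 1 := by
    have := Real.log_le_sub_one_of_pos (x := u / ⌊u⌋₊) (by positivity)
    rw [Real.log_div (by linarith) (by linarith)] at this
    have : u / ⌊u⌋₊ ≤ 2 := by
      rw [div_le_iff₀ (by linarith)]
      linarith [Nat.lt_floor_add_one u]
    linarith
  have hlog := Real.log_le_sub_one_of_pos (div_pos (hpos.trans_le hmono) hpos)
  rw [Real.log_div (by linarith) hpos.ne', div_sub_one hpos.ne'] at hlog
  rw [abs_of_nonneg (sub_nonneg.2 (Real.log_le_log hpos hmono))]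
  calc _ ≤ (log u - log ⌊u⌋₊) / log ⌊u⌋₊ := hlog
    _ ≤ 1 / log ⌊u⌋₊ := by gcongr; linarith
    _ ≤ 2 / log u := by
        rw [div_le_div_iff₀ hpos (by linarith), one_mul]
        exact log_le_two_mul_log_floor hu

theorem exists_abs_sum_inv_prime_sub_log_log_le :
    ∃ C : ℝ, ∀ u x : ℝ, 2 ≤ u → u ≤ x →
      |∑ p ∈ Ioc ⌊u⌋₊ ⌊x⌋₊ with p.Prime, 1 / (p : ℝ) - (log (log x) - log (log u))|
        ≤ C / log u := by
  obtain ⟨C, hC⟩ := exists_abs_sum_log_div_sub_log_le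
  have hC0 : 0 ≤ C := (abs_nonneg _).trans (hC 1 le_rfl)
  refine ⟨2 * (2 * C + 1) + 4, fun u x hu hux => ?_⟩
  have hfloor : 2 ≤ ⌊u⌋₊ := Nat.le_floor (by exact_mod_cast hu)
  have hlog : 0 < log u := Real.log_pos (by linarith)
  have hlogfloor : 0 < log ⌊u⌋₊ := Real.log_pos (by norm_cast)
  have hsum := abs_sum_div_log_sub_le (a := fun p => if p.Prime then log p / p else 0)
    (fun n hn => by rw [← sum_filter]; exact hC n hn) hfloor (Nat.floor_mono hux)
  have hterm : ∑ p ∈ Ioc ⌊u⌋₊ ⌊x⌋₊, (if p.Prime then log p / p else 0) / log p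
      = ∑ p ∈ Ioc ⌊u⌋₊ ⌊x⌋₊ with p.Prime, 1 / (p : ℝ) := by
    rw [sum_filter]
    refine sum_congr rfl fun p hp => ?_
    have : log p ≠ 0 := (Real.log_pos (by norm_cast; have := mem_Ioc.1 hp; omega)).ne'
    split_ifs
    · field_simp
    · exact zero_div _
  have hscale : (2 * C + 1) / log ⌊u⌋₊ ≤ 2 * (2 * C + 1) / log u := by
    rw [div_le_div_iff₀ hlogfloor hlog]
    nlinarith [log_le_two_mul_log_floor hu]
  have hx : 2 / log x ≤ 2 / log u :=
    div_le_div_of_nonneg_left (by norm_num) hlog (Real.log_le_log (by linarith) hux)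
  have hu' := abs_le.1 (abs_log_log_sub_log_log_floor_le hu)
  have hx' := abs_le.1 (abs_log_log_sub_log_log_floor_le (hu.trans hux))
  have hsum' := abs_le.1 hsum
  rw [hterm] at hsum'
  have hsplit : (2 * (2 * C + 1) + 4) / log u
      = 2 * (2 * C + 1) / log u + 2 / log u + 2 / log u := by ring
  rw [abs_le, hsplit]
  constructor <;> linarith

end Mertens

section BrunSieve

open Finset
open Real (exp)

variable {y : ℕ → ℕ} {g : ℕ → ℝ}

/-- The full Legendre product `∏ p ∈ (0, n], (1 - g p)`: the proportion of elements expected to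
survive the sieve if `g p` is the proportion removed by `p`. -/
def legendreProd (g : ℕ → ℝ) (n : ℕ) : ℝ := ∏ p ∈ Ioc 0 n, (1 - g p)

/-- The truncation rule of Brun's sieve with levels `y`. A set `S = {p₁ > p₂ > ⋯}` is read as the
continuation of a decreasing chain of `m` elements chosen earlier; then `pⱼ` has rank `m + j` in the
whole chain, and an element of even rank `2 * i` has to be at most `y i`. -/
def BrunAdmissible (y : ℕ → ℕ) (m : ℕ) (S : Finset ℕ) : Prop :=
  ∀ p ∈ S, Even (m + #{q ∈ S | p ≤ q}) → p ≤ y ((m + #{q ∈ S | p ≤ q}) / 2)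

instance (y : ℕ → ℕ) (m : ℕ) : DecidablePred (BrunAdmissible y m) :=
  fun S => inferInstanceAs (Decidable (∀ p ∈ S, _ → _))

/-- The index sets `S ⊆ (0, n]` which survive Brun's truncation of the inclusion-exclusion
formula. -/
def brunSets (y : ℕ → ℕ) (n m : ℕ) : Finset (Finset ℕ) :=
  {S ∈ (Ioc 0 n).powerset | BrunAdmissible y m S}

/-- Brun's truncated inclusion-exclusion sum. -/
def brunSum (y : ℕ → ℕ) (g : ℕ → ℝ) (n m : ℕ) : ℝ :=
  ∑ S ∈ brunSets y n m, (-1) ^ #S * ∏ p ∈ S, g p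

theorem mem_brunSets {n m : ℕ} {S : Finset ℕ} :
    S ∈ brunSets y n m ↔ S ⊆ Ioc 0 n ∧ BrunAdmissible y m S := by
  rw [brunSets, mem_filter, mem_powerset]

theorem legendreProd_succ (g : ℕ → ℝ) (n : ℕ) :
    legendreProd g (n + 1) = legendreProd g n - g (n + 1) * legendreProd g n := by
  rw [legendreProd, prod_Ioc_succ_top (Nat.zero_le n), legendreProd]
  ring

theorem legendreProd_nonneg (hg : ∀ p, g p ≤ 1) (n : ℕ) : 0 ≤ legendreProd g n :=
  prod_nonneg fun p _ => sub_nonneg.2 (hg p)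

theorem legendreProd_pos (hg : ∀ p, g p < 1) (n : ℕ) : 0 < legendreProd g n :=
  prod_pos fun p _ => sub_pos.2 (hg p)

theorem antitone_legendreProd (hg₀ : ∀ p, 0 ≤ g p) (hg₁ : ∀ p, g p ≤ 1) :
    Antitone (legendreProd g) :=
  antitone_nat_of_succ_le fun n => by
    rw [legendreProd_succ]
    exact sub_le_self _ (mul_nonneg (hg₀ _) (legendreProd_nonneg hg₁ n))

theorem legendreProd_mul_prod_Ioc (g : ℕ → ℝ) {m n : ℕ} (hmn : m ≤ n) :
    legendreProd g m * ∏ p ∈ Ioc m n, (1 - g p) = legendreProd g n := by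
  rw [legendreProd, legendreProd, ← prod_Ioc_consecutive _ (Nat.zero_le m) hmn]

theorem legendreProd_le_mul_exp_neg_sum (hg : ∀ p, g p ≤ 1) {m n : ℕ} (hmn : m ≤ n) :
    legendreProd g n ≤ legendreProd g m * exp (-∑ p ∈ Ioc m n, g p) := by
  rw [← legendreProd_mul_prod_Ioc g hmn, ← sum_neg_distrib, Real.exp_sum]
  refine mul_le_mul_of_nonneg_left (prod_le_prod (fun p _ => sub_nonneg.2 (hg p)) fun p _ => ?_)
    (legendreProd_nonneg hg m)
  linarith [Real.add_one_le_exp (-g p)]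

theorem brunAdmissible_insert_succ {n m : ℕ} {S : Finset ℕ} (hS : S ⊆ Ioc 0 n) :
    BrunAdmissible y m (insert (n + 1) S) ↔
      (Even (m + 1) → n + 1 ≤ y ((m + 1) / 2)) ∧ BrunAdmissible y (m + 1) S := by
  have hle : ∀ p ∈ S, p ≤ n := fun p hp => (mem_Ioc.1 (hS hp)).2
  have hnot : n + 1 ∉ S := fun h => by have := hle _ h; omega
  have hcard_top : #{q ∈ insert (n + 1) S | n + 1 ≤ q} = 1 := by
    rw [filter_insert, if_pos le_rfl, filter_eq_empty_iff.2 fun p hp => by have := hle p hp; omega,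
      insert_empty_eq, card_singleton]
  have hcard : ∀ p ∈ S, m + #{q ∈ insert (n + 1) S | p ≤ q} = m + 1 + #{q ∈ S | p ≤ q} := by
    intro p hp
    rw [filter_insert, if_pos (by have := hle p hp; omega),
      card_insert_of_notMem fun h => hnot (mem_of_mem_filter _ h)]
    omega
  rw [BrunAdmissible, forall_mem_insert, hcard_top]
  refine and_congr_right fun _ => forall₂_congr fun p hp => ?_
  rw [hcard p hp]

theorem brunSum_zero (y : ℕ → ℕ) (g : ℕ → ℝ) (m : ℕ) : brunSum y g 0 m = 1 := by
  simp [brunSum, brunSets, BrunAdmissible, filter_singleton]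

theorem brunSum_succ (y : ℕ → ℕ) (g : ℕ → ℝ) (n m : ℕ) :
    brunSum y g (n + 1) m = brunSum y g n m +
      if Even (m + 1) → n + 1 ≤ y ((m + 1) / 2) then -(g (n + 1) * brunSum y g n (m + 1))
      else 0 := by
  have hIoc : Ioc 0 (n + 1) = insert (n + 1) (Ioc 0 n) :=
    (insert_Ioc_right_eq_Ioc_add_one (Nat.zero_le n)).symm
  have hnot : n + 1 ∉ Ioc 0 n := by simp
  simp only [brunSum, brunSets, sum_filter]
  rw [hIoc, sum_powerset_insert hnot]
  congr 1
  split_ifs with hok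
  · rw [mul_sum, ← sum_neg_distrib]
    refine sum_congr rfl fun S hS => ?_
    have hS := mem_powerset.1 hS
    have hnotS : n + 1 ∉ S := fun h => hnot (hS h)
    have hiff := (brunAdmissible_insert_succ (y := y) (m := m) hS).trans (and_iff_right hok)
    simp only [hiff, card_insert_of_notMem hnotS, prod_insert hnotS]
    split_ifs <;> ring
  · refine sum_eq_zero fun S hS => if_neg ?_
    rw [brunAdmissible_insert_succ (mem_powerset.1 hS)]
    exact fun h => hok h.1

/-- The majorant of the contribution of rank `2 * i` to the truncation error of Brun's sieve. -/
noncomputable def brunTail (y : ℕ → ℕ) (g : ℕ → ℝ) (n m i : ℕ) : ℝ :=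
  if m ≤ 2 * i ∧ y i ≤ n then
    (∑ p ∈ Ioc (y i) n, g p) ^ (2 * i - m) / (2 * i - m).factorial * legendreProd g (y i)
  else 0

theorem brunTail_nonneg (hg₀ : ∀ p, 0 ≤ g p) (hg₁ : ∀ p, g p ≤ 1) (n m i : ℕ) :
    0 ≤ brunTail y g n m i := by
  have := legendreProd_nonneg hg₁ (y i)
  have := sum_nonneg fun p (_ : p ∈ Ioc (y i) n) => hg₀ p
  unfold brunTail
  split_ifs <;> positivity

theorem pow_succ_div_factorial_add_le {s t : ℝ} (hs : 0 ≤ s) (ht : 0 ≤ t) (j : ℕ) :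
    s ^ (j + 1) / (j + 1).factorial + t * (s ^ j / j.factorial)
      ≤ (s + t) ^ (j + 1) / (j + 1).factorial := by
  have hbinom : s ^ (j + 1) + (j + 1) * s ^ j * t ≤ (s + t) ^ (j + 1) := by
    simpa using pow_add_mul_le_add_pow hs (by positivity) (j + 1)
  rw [Nat.factorial_succ]
  push_cast
  have : (0 : ℝ) < j.factorial := by exact_mod_cast j.factorial_pos
  calc _ = (s ^ (j + 1) + (j + 1) * s ^ j * t) / ((j + 1) * j.factorial) := by field_simp
    _ ≤ _ := by gcongr

theorem brunTail_add_mul_le (hg₀ : ∀ p, 0 ≤ g p) (hg₁ : ∀ p, g p ≤ 1) (n m i : ℕ) :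
    brunTail y g n m i + g (n + 1) * brunTail y g n (m + 1) i ≤ brunTail y g (n + 1) m i := by
  have hV := legendreProd_nonneg hg₁ (y i)
  have hG := sum_nonneg fun p (_ : p ∈ Ioc (y i) n) => hg₀ p
  by_cases hy : y i ≤ n
  swap
  · simpa [brunTail, hy] using brunTail_nonneg hg₀ hg₁ (n + 1) m i
  by_cases hm : m + 1 ≤ 2 * i
  · obtain ⟨j, hj⟩ : ∃ j, 2 * i = m + 1 + j := Nat.exists_eq_add_of_le hm
    have hj₀ : 2 * i - m = j + 1 := by omega
    have hj₁ : 2 * i - (m + 1) = j := by omega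
    simp only [brunTail, hm, hy, (show m ≤ 2 * i by omega), (show y i ≤ n + 1 by omega), hj₀, hj₁,
      and_self, if_true, sum_Ioc_succ_top hy]
    rw [← mul_assoc, ← add_mul]
    exact mul_le_mul_of_nonneg_right (pow_succ_div_factorial_add_le hG (hg₀ _) j) hV
  · rcases (show 2 * i ≤ m by omega).eq_or_lt with rfl | hlt
    · simp [brunTail, hy, (show y i ≤ n + 1 by omega)]
    · simp [brunTail, hlt.not_ge, hm]

/-- The truncation error of Brun's sieve. The sign is chosen so that the error is nonnegative
for every `m`. -/
def brunDefect (y : ℕ → ℕ) (g : ℕ → ℝ) (n m : ℕ) : ℝ :=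
  (-1) ^ m * (legendreProd g n - brunSum y g n m)

theorem brunDefect_zero (y : ℕ → ℕ) (g : ℕ → ℝ) (m : ℕ) : brunDefect y g 0 m = 0 := by
  simp [brunDefect, brunSum_zero, legendreProd]

theorem brunDefect_succ (y : ℕ → ℕ) (g : ℕ → ℝ) (n m : ℕ) :
    brunDefect y g (n + 1) m = brunDefect y g n m + g (n + 1) * brunDefect y g n (m + 1) ∨
      ∃ i, m + 1 = 2 * i ∧ y i ≤ n ∧
        brunDefect y g (n + 1) m = brunDefect y g n m + g (n + 1) * legendreProd g n := by
  by_cases hok : Even (m + 1) → n + 1 ≤ y ((m + 1) / 2)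
  · left
    simp only [brunDefect]
    rw [legendreProd_succ, brunSum_succ, if_pos hok]
    ring
  · right
    obtain ⟨⟨i, hi⟩, hlt⟩ := Classical.not_imp.1 hok
    have hsign : (-1 : ℝ) ^ m = -1 :=
      Odd.neg_one_pow (Nat.not_even_iff_odd.1 (Nat.even_add_one.1 ⟨i, hi⟩))
    rw [hi, ← two_mul, Nat.mul_div_cancel_left i two_pos] at hlt
    refine ⟨i, by omega, by omega, ?_⟩
    simp only [brunDefect]
    rw [legendreProd_succ, brunSum_succ, if_neg hok, hsign]
    ring

theorem brunDefect_nonneg (hg₀ : ∀ p, 0 ≤ g p) (hg₁ : ∀ p, g p ≤ 1) (n m : ℕ) :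
    0 ≤ brunDefect y g n m := by
  induction n generalizing m with
  | zero => rw [brunDefect_zero]
  | succ n ih =>
    rcases brunDefect_succ y g n m with h | ⟨_, _, _, h⟩
    · rw [h]
      exact add_nonneg (ih m) (mul_nonneg (hg₀ _) (ih (m + 1)))
    · rw [h]
      exact add_nonneg (ih m) (mul_nonneg (hg₀ _) (legendreProd_nonneg hg₁ n))

theorem brunDefect_le_sum_brunTail (hg₀ : ∀ p, 0 ≤ g p) (hg₁ : ∀ p, g p ≤ 1) {n m I : ℕ}
    (hI : m + n ≤ 2 * I) : brunDefect y g n m ≤ ∑ i ∈ Icc 1 I, brunTail y g n m i := by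
  induction n generalizing m with
  | zero =>
    rw [brunDefect_zero]
    exact sum_nonneg fun i _ => brunTail_nonneg hg₀ hg₁ 0 m i
  | succ n ih =>
    have hadd {d : ℝ} (hd : d ≤ ∑ i ∈ Icc 1 I, brunTail y g n (m + 1) i) :
        brunDefect y g n m + g (n + 1) * d ≤ ∑ i ∈ Icc 1 I, brunTail y g (n + 1) m i := by
      refine (add_le_add (ih (by omega)) (mul_le_mul_of_nonneg_left hd (hg₀ (n + 1)))).trans ?_
      rw [mul_sum, ← sum_add_distrib]
      exact sum_le_sum fun i _ => brunTail_add_mul_le hg₀ hg₁ n m i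
    rcases brunDefect_succ y g n m with h | ⟨i, hi, hyi, h⟩
    · exact h.trans_le (hadd (ih (by omega)))
    · refine h.trans_le (hadd ?_)
      calc legendreProd g n ≤ legendreProd g (y i) := antitone_legendreProd hg₀ hg₁ hyi
        _ = brunTail y g n (m + 1) i := by simp [brunTail, hyi, hi]
        _ ≤ _ := single_le_sum (fun i _ => brunTail_nonneg hg₀ hg₁ n (m + 1) i)
          (mem_Icc.2 ⟨by omega, by omega⟩)

theorem brunSum_le_legendreProd (hg₀ : ∀ p, 0 ≤ g p) (hg₁ : ∀ p, g p ≤ 1) (n : ℕ) :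
    brunSum y g n 0 ≤ legendreProd g n := by
  have := brunDefect_nonneg (y := y) hg₀ hg₁ n 0
  rwa [brunDefect, pow_zero, one_mul, sub_nonneg] at this

theorem legendreProd_sub_sum_brunTail_le (hg₀ : ∀ p, 0 ≤ g p) (hg₁ : ∀ p, g p ≤ 1) (n : ℕ) :
    legendreProd g n - ∑ i ∈ Icc 1 n, brunTail y g n 0 i ≤ brunSum y g n 0 := by
  have := brunDefect_le_sum_brunTail (y := y) hg₀ hg₁ (n := n) (m := 0) (I := n) (by omega)
  rw [brunDefect, pow_zero, one_mul] at this
  linarith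

theorem sum_Icc_pow_le {r : ℝ} (hr₀ : 0 ≤ r) (hr₁ : r < 1) (n : ℕ) :
    ∑ i ∈ Icc 1 n, r ^ i ≤ r / (1 - r) := by
  have hgeom := mul_neg_geom_sum r n
  rw [← Ico_succ_right_eq_Icc, sum_Ico_eq_sum_range, le_div_iff₀ (by linarith)]
  simp only [Nat.succ_eq_succ, Nat.succ_eq_add_one, Nat.add_sub_cancel, pow_add, pow_one,
    ← mul_sum]
  have : 0 ≤ r ^ n := by positivity
  nlinarith

theorem half_pow_div_factorial_mul_exp_le {i : ℕ} (hi : 1 ≤ i) :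
    ((i : ℝ) / 2) ^ (2 * i) / (2 * i).factorial * exp (i / 2) ≤ 2 / 7 * 0.7616 ^ i := by
  have hi₀ : (1 : ℝ) ≤ i := by exact_mod_cast hi
  have hsqrt : (7 / 2 : ℝ) ≤ √(2 * Real.pi * (2 * i : ℕ)) := by
    refine Real.le_sqrt_of_sq_le ?_
    push_cast
    nlinarith [Real.pi_gt_d2]
  have hstirling : 7 / 2 * ((2 * i : ℕ) / exp 1) ^ (2 * i) ≤ (2 * i).factorial :=
    (mul_le_mul_of_nonneg_right hsqrt (by positivity)).trans (Stirling.le_factorial_stirling _)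
  have hexp : exp (5 / 2) ≤ 16 * 0.7616 := by
    have : exp (5 / 2) ^ 2 = exp 1 ^ 5 := by
      rw [← Real.exp_nat_mul, ← Real.exp_nat_mul]; norm_num
    have h₁ : exp 1 ^ 5 ≤ 2.7182818286 ^ 5 := by
      gcongr
      exact Real.exp_one_lt_d9.le
    refine le_of_sq_le_sq (a := exp (5 / 2)) ?_ (by norm_num)
    rw [this]
    exact h₁.trans (by norm_num)
  have hbase : (exp 1 / 4) ^ (2 * i) * exp (i / 2) = (exp (5 / 2) / 16) ^ i := by
    have : exp (i / 2) = exp (1 / 2) ^ i := by rw [← Real.exp_nat_mul]; ring_nf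
    rw [this, pow_mul, ← mul_pow]
    congr 1
    rw [div_pow, ← Real.exp_nat_mul, div_mul_eq_mul_div, ← Real.exp_add]
    norm_num
  have hratio : (i : ℝ) / 2 = exp 1 / 4 * ((2 * i : ℕ) / exp 1) := by
    push_cast
    field_simp
    norm_num
  calc ((i : ℝ) / 2) ^ (2 * i) / (2 * i).factorial * exp (i / 2)
      ≤ ((i : ℝ) / 2) ^ (2 * i) / (7 / 2 * ((2 * i : ℕ) / exp 1) ^ (2 * i)) * exp (i / 2) := by
        gcongr
    _ = 2 / 7 * ((exp 1 / 4) ^ (2 * i) * exp (i / 2)) := by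
        rw [hratio, mul_pow]
        field_simp
    _ ≤ 2 / 7 * 0.7616 ^ i := by
        rw [hbase]
        gcongr
        linarith

theorem sum_half_pow_div_factorial_mul_exp_le (n : ℕ) :
    ∑ i ∈ Icc 1 n, ((i : ℝ) / 2) ^ (2 * i) / (2 * i).factorial * exp (i / 2) ≤ 19 / 20 :=
  calc _ ≤ ∑ i ∈ Icc 1 n, (2 / 7 * 0.7616 ^ i : ℝ) :=
        sum_le_sum fun _ hi => half_pow_div_factorial_mul_exp_le (mem_Icc.1 hi).1
    _ ≤ 2 / 7 * (0.7616 / (1 - 0.7616)) := by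
        rw [← mul_sum]
        gcongr
        exact sum_Icc_pow_le (by norm_num) (by norm_num) n
    _ ≤ 19 / 20 := by norm_num

theorem brunTail_le (hg₀ : ∀ p, 0 ≤ g p) (hg₁ : ∀ p, g p < 1) {n i : ℕ}
    (hy : legendreProd g (y i) ≤ exp (i / 2) * legendreProd g n) :
    brunTail y g n 0 i
      ≤ ((i : ℝ) / 2) ^ (2 * i) / (2 * i).factorial * exp (i / 2) * legendreProd g n := by
  have hV := legendreProd_pos hg₁ n
  have hVy := legendreProd_pos hg₁ (y i)
  have hG := sum_nonneg fun p (_ : p ∈ Ioc (y i) n) => hg₀ p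
  unfold brunTail
  split_ifs with h
  · have hsum : ∑ p ∈ Ioc (y i) n, g p ≤ i / 2 := by
      have hdecay := legendreProd_le_mul_exp_neg_sum (fun p => (hg₁ p).le) h.2
      have : 1 ≤ exp (i / 2) * exp (-∑ p ∈ Ioc (y i) n, g p) := by
        refine le_of_mul_le_mul_right ?_ hV
        calc 1 * legendreProd g n ≤ legendreProd g (y i) * exp (-∑ p ∈ Ioc (y i) n, g p) := by
              rwa [one_mul]
          _ ≤ exp (i / 2) * legendreProd g n * exp (-∑ p ∈ Ioc (y i) n, g p) := by gcongr
          _ = _ := by ring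
      rw [← Real.exp_add, Real.one_le_exp_iff] at this
      linarith
    rw [mul_assoc _ (exp _), Nat.sub_zero]
    gcongr
  · positivity

theorem legendreProd_div_twenty_le_brunSum (hg₀ : ∀ p, 0 ≤ g p) (hg₁ : ∀ p, g p < 1) {n : ℕ}
    (hy : ∀ i, 1 ≤ i → legendreProd g (y i) ≤ exp (i / 2) * legendreProd g n) :
    legendreProd g n / 20 ≤ brunSum y g n 0 := by
  have htail : ∑ i ∈ Icc 1 n, brunTail y g n 0 i ≤ 19 / 20 * legendreProd g n := by
    refine (sum_le_sum fun i hi => brunTail_le hg₀ hg₁ (hy i (mem_Icc.1 hi).1)).trans ?_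
    rw [← sum_mul]
    exact mul_le_mul_of_nonneg_right (sum_half_pow_div_factorial_mul_exp_le n)
      (legendreProd_pos hg₁ n).le
  have := legendreProd_sub_sum_brunTail_le (y := y) hg₀ (fun p => (hg₁ p).le) n
  linarith

theorem sum_brunSets_prod_le (hg₀ : ∀ p, 0 ≤ g p) (n m : ℕ) :
    ∑ S ∈ brunSets y n m, ∏ p ∈ S, g p ≤ ∏ p ∈ Ioc 0 n, (1 + g p) := by
  rw [prod_one_add, brunSets]
  exact sum_le_sum_of_subset_of_nonneg (filter_subset _ _)
    fun S _ _ => prod_nonneg fun p _ => hg₀ p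

/-- The recursion for the bound is `B m = q ^ ((m + 1) / 2) * L + B (m + 1)`, the first summand
bounding the logarithm of the element of rank `m + 1`. -/
theorem sum_log_le_of_mem_brunSets {q L : ℝ} (hq₀ : 0 < q) (hq₁ : q < 1) (hL : 0 ≤ L)
    (hy : ∀ i, Real.log (y i) ≤ q ^ i * L) {n m : ℕ} {S : Finset ℕ} (hS : S ∈ brunSets y n m)
    (hn : Even m → n ≤ y (m / 2)) :
    ∑ p ∈ S, Real.log p ≤ (q ^ ((m + 1) / 2) + q ^ (m / 2 + 1)) / (1 - q) * L := by
  have hq : 0 < 1 - q := by linarith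
  induction n generalizing m S with
  | zero =>
    obtain rfl : S = ∅ := by simpa using (mem_brunSets.1 hS).1
    rw [sum_empty]
    positivity
  | succ n ih =>
    obtain ⟨hsub, hadm⟩ := mem_brunSets.1 hS
    have hIoc : Ioc 0 (n + 1) = insert (n + 1) (Ioc 0 n) :=
      (insert_Ioc_right_eq_Ioc_add_one (Nat.zero_le n)).symm
    rw [hIoc] at hsub
    by_cases hmem : n + 1 ∈ S
    · have hsub' : S.erase (n + 1) ⊆ Ioc 0 n := subset_insert_iff.1 hsub
      rw [← insert_erase hmem, brunAdmissible_insert_succ hsub'] at hadm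
      have hle : n + 1 ≤ y ((m + 1) / 2) := by
        rcases Nat.even_or_odd m with hm | hm
        · rw [Nat.succ_div_of_not_dvd (by rw [← even_iff_two_dvd, Nat.even_add_one]; simpa)]
          exact hn hm
        · exact hadm.1 hm.add_one
      have hlog : Real.log (n + 1 : ℕ) ≤ q ^ ((m + 1) / 2) * L :=
        (Real.log_le_log (by positivity) (by exact_mod_cast hle)).trans (hy _)
      have hrec := ih (mem_brunSets.2 ⟨hsub', hadm.2⟩) fun _ => by omega
      rw [← add_sum_erase S _ hmem]
      refine (add_le_add hlog hrec).trans_eq ?_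
      rw [show (m + 1 + 1) / 2 = m / 2 + 1 by omega]
      field_simp
      ring
    · refine ih (mem_brunSets.2 ⟨?_, hadm⟩) fun hm => (Nat.le_succ n).trans (hn hm)
      rwa [subset_insert_iff_of_notMem hmem] at hsub

open Classical in
theorem mul_brunSum_sub_sum_le_card {α : Type*} (T : Finset α) (A : ℕ → α → Prop) {X : ℝ} {n : ℕ}
    {R : Finset ℕ → ℝ}
    (hR : ∀ S ∈ brunSets y n 0, |#{t ∈ T | ∀ p ∈ S, A p t} - X * ∏ p ∈ S, g p| ≤ R S) :
    X * brunSum y g n 0 - ∑ S ∈ brunSets y n 0, R S ≤ #{t ∈ T | ∀ p ∈ Ioc 0 n, ¬ A p t} := by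
  set χ : α → ℕ → ℝ := fun t p => if A p t then 1 else 0 with hχ
  have hχ₀ : ∀ t p, 0 ≤ χ t p := fun t p => by simp only [hχ]; split_ifs <;> norm_num
  have hχ₁ : ∀ t p, χ t p ≤ 1 := fun t p => by simp only [hχ]; split_ifs <;> norm_num
  have hcount : ∀ S : Finset ℕ, (#{t ∈ T | ∀ p ∈ S, A p t} : ℝ) = ∑ t ∈ T, ∏ p ∈ S, χ t p := by
    intro S
    simp only [hχ, prod_ite_zero, prod_const_one, sum_boole]
  have hsurvive : (#{t ∈ T | ∀ p ∈ Ioc 0 n, ¬ A p t} : ℝ) = ∑ t ∈ T, legendreProd (χ t) n := by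
    have : ∀ t p, 1 - χ t p = if ¬ A p t then 1 else 0 := fun t p => by
      simp only [hχ]; split_ifs <;> norm_num
    simp only [legendreProd, this, prod_ite_zero, prod_const_one, sum_boole]
    congr!
  have hswap : ∑ t ∈ T, brunSum y (χ t) n 0
      = ∑ S ∈ brunSets y n 0, (-1) ^ #S * (#{t ∈ T | ∀ p ∈ S, A p t} : ℝ) := by
    simp only [brunSum, hcount, mul_sum]
    exact sum_comm
  have happrox : X * brunSum y g n 0 - ∑ t ∈ T, brunSum y (χ t) n 0
      ≤ ∑ S ∈ brunSets y n 0, R S := by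
    rw [hswap, brunSum, mul_sum, ← sum_sub_distrib]
    refine sum_le_sum fun S hS => (le_abs_self _).trans ?_
    calc _ = |(-1) ^ #S * -(#{t ∈ T | ∀ p ∈ S, A p t} - X * ∏ p ∈ S, g p)| := by
          congr 1
          ring
      _ ≤ R S := by
          rw [abs_mul, abs_neg_one_pow, one_mul, abs_neg]
          exact hR S hS
  have hle : ∑ t ∈ T, brunSum y (χ t) n 0 ≤ ∑ t ∈ T, legendreProd (χ t) n :=
    sum_le_sum fun t _ => brunSum_le_legendreProd (hχ₀ t) (hχ₁ t) n
  linarith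

end BrunSieve

section PeriodicCount

open Finset
open Function (Periodic)

theorem periodic_of_dvd {α : Type*} {f : ℕ → α} {d e : ℕ} (hf : Periodic f d) (hde : d ∣ e) :
    Periodic f e := by
  obtain ⟨t, rfl⟩ := hde
  simpa only [mul_comm d t, Nat.cast_id] using hf.nat_mul t

theorem periodic_forall_mem {A : ℕ → ℕ → Prop} (hA : ∀ p, Periodic (A p) p) (S : Finset ℕ) :
    Periodic (fun m => ∀ p ∈ S, A p m) (∏ p ∈ S, p) := fun m =>
  forall₂_congr (p := fun p (_ : p ∈ S) => A p (m + ∏ p ∈ S, p)) (fun p hp =>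
    (periodic_of_dvd (hA p) (dvd_prod_of_mem _ hp) m).to_iff) |> propext

theorem count_not_add_count (A : ℕ → Prop) [DecidablePred A] (n : ℕ) :
    Nat.count (fun m => ¬ A m) n + Nat.count A n = n := by
  rw [Nat.count_eq_card_filter_range, Nat.count_eq_card_filter_range, add_comm,
    card_filter_add_card_filter_not, card_range]

theorem count_and_mul_of_periodic {A B : ℕ → Prop} [DecidablePred A] [DecidablePred B] {a b : ℕ}
    (hab : a.Coprime b) (ha : 0 < a) (hb : 0 < b) (hA : Periodic A a) (hB : Periodic B b) :
    Nat.count (fun m => A m ∧ B m) (a * b) = Nat.count A a * Nat.count B b := by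
  simp only [Nat.count_eq_card_filter_range, ← card_product]
  refine card_nbij' (fun m => (m % a, m % b))
    (fun x => (Nat.chineseRemainder hab x.1 x.2 : ℕ)) ?_ ?_ ?_ ?_
  · intro m hm
    simp only [coe_filter, mem_range, Set.mem_ofPred_eq] at hm
    simpa [Nat.mod_lt, ha, hb, hA.map_mod_nat, hB.map_mod_nat] using hm.2
  · intro x hx
    simp only [coe_product, coe_filter, mem_range, Set.mem_prod, Set.mem_ofPred_eq] at hx ⊢
    obtain ⟨hcrA, hcrB⟩ := (Nat.chineseRemainder hab x.1 x.2).2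
    refine ⟨Nat.chineseRemainder_lt_mul hab _ _ ha.ne' hb.ne', ?_, ?_⟩
    · rw [← hA.map_mod_nat, hcrA, hA.map_mod_nat]
      exact hx.1.2
    · rw [← hB.map_mod_nat, hcrB, hB.map_mod_nat]
      exact hx.2.2
  · intro m hm
    simp only [coe_filter, mem_range, Set.mem_ofPred_eq] at hm
    exact (Nat.ModEq.eq_of_lt_of_lt (Nat.chineseRemainder_modEq_unique hab
      (Nat.mod_modEq m a).symm (Nat.mod_modEq m b).symm) hm.1
      (Nat.chineseRemainder_lt_mul hab _ _ ha.ne' hb.ne')).symm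
  · intro x hx
    simp only [coe_product, coe_filter, mem_range, Set.mem_prod, Set.mem_ofPred_eq] at hx
    obtain ⟨hcrA, hcrB⟩ := (Nat.chineseRemainder hab x.1 x.2).2
    exact Prod.ext (Eq.trans hcrA (Nat.mod_eq_of_lt hx.1.1))
      (Eq.trans hcrB (Nat.mod_eq_of_lt hx.2.1))

theorem count_forall_mem_prod {A : ℕ → ℕ → Prop} [∀ p, DecidablePred (A p)]
    (hA : ∀ p, Periodic (A p) p) (S : Finset ℕ) (hS : ∀ p ∈ S, p.Prime) :
    Nat.count (fun m => ∀ p ∈ S, A p m) (∏ p ∈ S, p) = ∏ p ∈ S, Nat.count (A p) p := by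
  induction S using Finset.induction_on with
  | empty => simp
  | insert q S hq ih =>
    simp only [mem_insert, forall_eq_or_imp] at hS ⊢
    have hcop : q.Coprime (∏ p ∈ S, p) := Nat.Coprime.prod_right fun p hp =>
      (Nat.coprime_primes hS.1 (hS.2 p hp)).2 (ne_of_mem_of_not_mem hp hq).symm
    rw [prod_insert hq, prod_insert hq, ← ih hS.2,
      ← count_and_mul_of_periodic hcop hS.1.pos (prod_pos fun p hp => (hS.2 p hp).pos) (hA q)
        (periodic_forall_mem hA S)]

theorem count_mul_add_of_periodic {A : ℕ → Prop} [DecidablePred A] {d : ℕ} (hA : Periodic A d)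
    (t r : ℕ) : Nat.count A (d * t + r) = t * Nat.count A d + Nat.count A r := by
  induction t with
  | zero => simp
  | succ t ih =>
    have hshift : (fun m => A (d + m)) = A := funext fun m => by rw [add_comm d m, hA m]
    rw [show d * (t + 1) + r = d + (d * t + r) by ring, Nat.count_add]
    simp only [hshift, ih]
    ring

theorem abs_count_sub_le_of_periodic {A : ℕ → Prop} [DecidablePred A] {d : ℕ} (hd : 0 < d)
    (hA : Periodic A d) (X : ℕ) :
    |(Nat.count A X : ℝ) - X * (Nat.count A d / d)| ≤ Nat.count A d := by
  have hd₀ : (0 : ℝ) < d := Nat.cast_pos.2 hd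
  have hcount : (Nat.count A X : ℝ) = (X / d : ℕ) * Nat.count A d + Nat.count A (X % d) := by
    rw [← Nat.cast_mul, ← Nat.cast_add, ← count_mul_add_of_periodic hA, Nat.div_add_mod]
  have hX : (X : ℝ) * (Nat.count A d / d)
      = (X / d : ℕ) * Nat.count A d + ((X % d : ℕ) / d : ℝ) * Nat.count A d := by
    have : (X : ℝ) = d * (X / d : ℕ) + (X % d : ℕ) := mod_cast (Nat.div_add_mod X d).symm
    rw [this]
    field_simp
  have hfrac : ((X % d : ℕ) / d : ℝ) ≤ 1 :=
    (div_le_one hd₀).2 (Nat.cast_le.2 (Nat.mod_lt X hd).le)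
  rw [hcount, hX, add_sub_add_left_eq_sub]
  exact abs_sub_le_of_nonneg_of_le (Nat.cast_nonneg _)
    (Nat.cast_le.2 (Nat.count_monotone A (Nat.mod_lt X hd).le)) (by positivity)
    (mul_le_of_le_one_left (Nat.cast_nonneg _) hfrac)

theorem abs_count_forall_mem_sub_le {A : ℕ → ℕ → Prop} [∀ p, DecidablePred (A p)]
    (hA : ∀ p, Periodic (A p) p) (hprime : ∀ p m, A p m → p.Prime) (S : Finset ℕ) (X : ℕ) :
    |(Nat.count (fun m => ∀ p ∈ S, A p m) X : ℝ) - X * ∏ p ∈ S, (Nat.count (A p) p / p : ℝ)|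
      ≤ ∏ p ∈ S, (Nat.count (A p) p : ℝ) := by
  by_cases hS : ∀ p ∈ S, p.Prime
  · have happrox := abs_count_sub_le_of_periodic (prod_pos fun p hp => (hS p hp).pos)
      (periodic_forall_mem hA S) X
    rw [count_forall_mem_prod hA S hS] at happrox
    simpa only [Nat.cast_prod, prod_div_distrib] using happrox
  · obtain ⟨p, hp, hnp⟩ := not_forall₂.1 hS
    have hempty : ∀ m, ¬ A p m := fun m hm => hnp (hprime p m hm)
    have hzero : ∀ n, Nat.count (A p) n = 0 := fun n => Nat.count_of_forall_not fun m _ => hempty m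
    rw [Nat.count_of_forall_not fun m _ h => hempty m (h p hp), prod_eq_zero hp (by simp [hzero]),
      prod_eq_zero hp (by simp [hzero])]
    simp

end PeriodicCount

section SieveDensity

open Finset Filter
open Real (exp log)
open Function (Periodic)

/-- `g p` is the proportion of residues removed by `p` in a sieve of dimension `k` whose sifting
primes all exceed `w`. -/
structure IsSieveDensity (k w : ℕ) (g : ℕ → ℝ) : Prop where
  nonneg : ∀ p, 0 ≤ g p
  le_div : ∀ p, g p ≤ k / p
  prime_and_lt : ∀ p, g p ≠ 0 → p.Prime ∧ w < p

variable {k w : ℕ} {g : ℕ → ℝ}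

theorem IsSieveDensity.legendreProd_eq_one (hg : IsSieveDensity k w g) {n : ℕ} (hn : n ≤ w) :
    legendreProd g n = 1 := by
  refine prod_eq_one fun p hp => ?_
  have : g p = 0 := by
    by_contra h
    exact absurd (hg.prime_and_lt p h).2 (by grind)
  rw [this, sub_zero]

theorem IsSieveDensity.legendreProd_floor_max (hg : IsSieveDensity k w g) (x : ℝ) :
    legendreProd g ⌊max x w⌋₊ = legendreProd g ⌊x⌋₊ := by
  rcases le_total (w : ℝ) x with h | h
  · rw [max_eq_left h]
  · rw [max_eq_right h, Nat.floor_natCast, hg.legendreProd_eq_one le_rfl,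
      hg.legendreProd_eq_one (Nat.floor_le_of_le h)]

theorem IsSieveDensity.lt_one (hg : IsSieveDensity k w g) (hw : 2 * k ≤ w) (p : ℕ) : g p < 1 := by
  rcases eq_or_ne (g p) 0 with h | h
  · rw [h]
    exact one_pos
  · obtain ⟨-, hwp⟩ := hg.prime_and_lt p h
    refine (hg.le_div p).trans_lt ((div_lt_one (by exact_mod_cast hwp.pos)).2 ?_)
    exact_mod_cast (by omega : k < p)

theorem exp_neg_le_one_sub {t : ℝ} (ht₀ : 0 ≤ t) (ht : t ≤ 1 / 2) :
    exp (-(t + 2 * t ^ 2)) ≤ 1 - t := by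
  rw [Real.exp_neg, inv_le_comm₀ (Real.exp_pos _) (by linarith)]
  refine le_trans ?_ (Real.add_one_le_exp _)
  rw [inv_le_iff_one_le_mul₀ (by linarith)]
  nlinarith [mul_nonneg ht₀ ht₀]

theorem IsSieveDensity.exp_neg_le_one_sub (hg : IsSieveDensity k w g) (hw : 2 * k ≤ w) (p : ℕ) :
    exp (-(k * (if p.Prime then 1 / (p : ℝ) else 0) + 2 * k ^ 2 * ((p : ℝ) ^ 2)⁻¹)) ≤ 1 - g p := by
  rcases eq_or_ne (g p) 0 with h | h
  · rw [h, sub_zero, Real.exp_le_one_iff, neg_nonpos]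
    positivity
  · obtain ⟨hp, hwp⟩ := hg.prime_and_lt p h
    have hhalf : (k / p : ℝ) ≤ 1 / 2 := by
      rw [div_le_div_iff₀ (by exact_mod_cast hp.pos) two_pos]
      exact_mod_cast (by omega : k * 2 ≤ 1 * p)
    refine le_trans ?_ ((_root_.exp_neg_le_one_sub (by positivity) hhalf).trans
      (sub_le_sub_left (hg.le_div p) 1))
    rw [if_pos hp]
    apply le_of_eq
    congr 1
    ring

theorem exists_mul_sum_inv_prime_add_sum_inv_sq_le (k : ℕ) :
    ∃ K : ℝ, 0 ≤ K ∧ ∀ u x : ℝ, 2 ≤ u → u ≤ x →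
      k * ∑ p ∈ Ioc ⌊u⌋₊ ⌊x⌋₊ with p.Prime, 1 / (p : ℝ)
          + 2 * k ^ 2 * ∑ p ∈ Ioc ⌊u⌋₊ ⌊x⌋₊, ((p : ℝ) ^ 2)⁻¹
        ≤ k * (log (log x) - log (log u)) + K / log u := by
  obtain ⟨C, hC⟩ := exists_abs_sum_inv_prime_sub_log_log_le
  refine ⟨k * |C| + 4 * k ^ 2, by positivity, fun u x hu hux => ?_⟩
  have hlog : 0 < log u := Real.log_pos (by linarith)
  have hfloor : 2 ≤ ⌊u⌋₊ := Nat.le_floor hu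
  have hprimes : ∑ p ∈ Ioc ⌊u⌋₊ ⌊x⌋₊ with p.Prime, 1 / (p : ℝ)
      ≤ log (log x) - log (log u) + |C| / log u := by
    have habs : C / log u ≤ |C| / log u := by gcongr; exact le_abs_self C
    linarith [(abs_le.1 (hC u x hu hux)).2]
  have hsquares : ∑ p ∈ Ioc ⌊u⌋₊ ⌊x⌋₊, ((p : ℝ) ^ 2)⁻¹ ≤ 2 / log u := by
    have hinv : ((⌊u⌋₊ : ℝ))⁻¹ ≤ 2 / log u := by
      have hfloor' : (2 : ℝ) ≤ ⌊u⌋₊ := by exact_mod_cast hfloor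
      rw [inv_eq_one_div, div_le_div_iff₀ (by linarith) hlog]
      linarith [Real.log_le_sub_one_of_pos (show 0 < u by linarith), Nat.lt_floor_add_one u]
    have htele := sum_Ioc_inv_sq_le_sub (α := ℝ) (by omega : ⌊u⌋₊ ≠ 0) (Nat.floor_mono hux)
    exact (htele.trans (sub_le_self _ (by positivity))).trans hinv
  calc _ ≤ k * (log (log x) - log (log u) + |C| / log u) + 2 * k ^ 2 * (2 / log u) := by gcongr
    _ = _ := by ring

theorem exists_legendreProd_le_mul (k : ℕ) :
    ∃ K : ℝ, 0 ≤ K ∧ ∀ (w : ℕ) (g : ℕ → ℝ), 2 * k ≤ w → IsSieveDensity k w g →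
      ∀ u x : ℝ, 2 ≤ u → u ≤ x →
        legendreProd g ⌊u⌋₊ ≤ (log x / log u) ^ k * exp (K / log u) * legendreProd g ⌊x⌋₊ := by
  obtain ⟨K, hK, hsum⟩ := exists_mul_sum_inv_prime_add_sum_inv_sq_le k
  refine ⟨K, hK, fun w g hw hg u x hu hux => ?_⟩
  have hlogu : 0 < log u := Real.log_pos (by linarith)
  have hlogx : 0 < log x := Real.log_pos (by linarith)
  have hprod : exp (-(k * (log (log x) - log (log u)) + K / log u))
      ≤ ∏ p ∈ Ioc ⌊u⌋₊ ⌊x⌋₊, (1 - g p) := by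
    refine le_trans ?_ (prod_le_prod (fun p _ => (Real.exp_pos _).le)
      fun p _ => hg.exp_neg_le_one_sub hw p)
    rw [← Real.exp_sum, sum_neg_distrib, sum_add_distrib, ← mul_sum, ← mul_sum, ← sum_filter]
    exact Real.exp_le_exp.2 (neg_le_neg (hsum u x hu hux))
  have hexp : (log x / log u) ^ k * exp (K / log u)
      = exp (k * (log (log x) - log (log u)) + K / log u) := by
    rw [Real.exp_add, Real.exp_nat_mul, ← Real.log_div hlogx.ne' hlogu.ne',
      Real.exp_log (by positivity)]
  rw [← legendreProd_mul_prod_Ioc g (Nat.floor_mono hux), hexp, mul_left_comm]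
  refine le_mul_of_one_le_right (legendreProd_nonneg (fun p => (hg.lt_one hw p).le) _) ?_
  rwa [← inv_le_iff_one_le_mul₀' (Real.exp_pos _), ← Real.exp_neg]

/-- The last bound forces `q > exp (-1 / (2 * k))`, while `(1 + q) / (1 - q) < 4 * k + 1` means
`q < 2 * k / (2 * k + 1)`; these are compatible because `1 + x < exp x` at `x = 1 / (2 * k)`. -/
theorem exists_mul_neg_log_add_div_log_le_half (hk : 1 ≤ k) (K : ℝ) :
    ∃ (q : ℝ) (w : ℕ), 0 < q ∧ q < 1 ∧ (1 + q) / (1 - q) < 4 * k + 1 ∧ 2 * k ≤ w ∧ 2 ≤ w ∧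
      k * -log q + K / log w ≤ 1 / 2 := by
  have _ : (0 : ℝ) < k := by exact_mod_cast hk
  obtain ⟨q, hexp_lt, hlt⟩ : ∃ q : ℝ, exp (-(1 / (2 * k))) < q ∧ q < 2 * k / (2 * k + 1) := by
    refine exists_between ?_
    rw [Real.exp_neg, inv_eq_one_div, div_lt_div_iff₀ (Real.exp_pos _) (by positivity), one_mul]
    calc (2 * k + 1 : ℝ) = 2 * k * (1 / (2 * k) + 1) := by
          field_simp
          ring
      _ < 2 * k * exp (1 / (2 * k)) := by
          gcongr
          exact Real.add_one_lt_exp (by positivity)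
  have hq₀ : 0 < q := (Real.exp_pos _).trans hexp_lt
  have hq₁ : q < 1 := hlt.trans ((div_lt_one (by positivity)).2 (by linarith))
  have hlogq : k * -log q < 1 / 2 := by
    have : -(1 / (2 * k)) < log q := (Real.lt_log_iff_exp_lt hq₀).2 hexp_lt
    calc k * -log q < k * (1 / (2 * k)) := by gcongr; linarith
      _ = 1 / 2 := by field_simp
  have htendsto : Tendsto (fun w : ℕ => K / log w) atTop (nhds 0) :=
    tendsto_const_nhds.div_atTop (Real.tendsto_log_atTop.comp tendsto_natCast_atTop_atTop)
  obtain ⟨w, hw, hkw, h2w⟩ := ((htendsto.eventually_le_const (sub_pos.2 hlogq)).and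
    ((eventually_ge_atTop (2 * k)).and (eventually_ge_atTop 2))).exists
  refine ⟨q, w, hq₀, hq₁, ?_, hkw, h2w, by linarith⟩
  rw [lt_div_iff₀ (by positivity)] at hlt
  rw [div_lt_iff₀ (by linarith)]
  linarith

theorem div_pow_mul_exp_le {q x y D E b : ℝ} {i : ℕ} (hq : 0 < q) (hx : 0 < x)
    (hxy : q ^ i * x ≤ y) (hD : D ≤ i * E) (hb : k * -log q + E ≤ b) :
    (x / y) ^ k * exp D ≤ exp (i * b) := by
  have hqx : 0 < q ^ i * x := by positivity
  have hy : 0 < y := hqx.trans_le hxy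
  have hbase : x / y ≤ exp (i * -log q) := by
    rw [Real.exp_nat_mul, Real.exp_neg, Real.exp_log hq, inv_pow, div_le_iff₀ hy,
      ← div_eq_inv_mul, le_div_iff₀' (by positivity)]
    exact hxy
  calc (x / y) ^ k * exp D ≤ exp (i * -log q) ^ k * exp (i * E) := by gcongr
    _ = exp (i * (k * -log q + E)) := by
      rw [← Real.exp_nat_mul, ← Real.exp_add]
      ring_nf
    _ ≤ exp (i * b) := by gcongr

theorem exists_brun_levels (hk : 1 ≤ k) :
    ∃ (q : ℝ) (w : ℕ) (c : ℝ), 0 < q ∧ q < 1 ∧ (1 + q) / (1 - q) < 4 * k + 1 ∧ 2 * k ≤ w ∧ 2 ≤ w ∧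
      0 < c ∧ ∀ g : ℕ → ℝ, IsSieveDensity k w g → ∀ n ≥ w, c / log n ^ k ≤ legendreProd g n ∧
        ∀ i : ℕ, 1 ≤ i → legendreProd g ⌊(n : ℝ) ^ q ^ i⌋₊ ≤ exp (i / 2) * legendreProd g n := by
  obtain ⟨K, hK, hratio⟩ := exists_legendreProd_le_mul k
  obtain ⟨q, w, hq₀, hq₁, hlevel, hkw, h2w, hhalf⟩ := exists_mul_neg_log_add_div_log_le_half hk K
  have h2w' : (2 : ℝ) ≤ w := by exact_mod_cast h2w
  have hlogw : 0 < log w := Real.log_pos (by linarith)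
  refine ⟨q, w, log w ^ k / exp (K / log w), hq₀, hq₁, hlevel, hkw, h2w, by positivity,
    fun g hg n hn => ?_⟩
  have hwn : (w : ℝ) ≤ n := by exact_mod_cast hn
  have hn₁ : (1 : ℝ) ≤ n := by linarith
  have hlogn : 0 < log n := Real.log_pos (by linarith)
  have hV₀ := legendreProd_nonneg (fun p => (hg.lt_one hkw p).le) n
  refine ⟨?_, fun i hi => ?_⟩
  · have := hratio w g hkw hg w n h2w' hwn
    rw [Nat.floor_natCast, Nat.floor_natCast, hg.legendreProd_eq_one le_rfl, div_pow] at this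
    rw [div_div, div_le_iff₀ (by positivity)]
    calc log w ^ k = log w ^ k * 1 := (mul_one _).symm
      _ ≤ log w ^ k * (log n ^ k / log w ^ k * exp (K / log w) * legendreProd g n) := by gcongr
      _ = _ := by field_simp
  · set u : ℝ := max ((n : ℝ) ^ q ^ i) w with hu
    have hwu : (w : ℝ) ≤ u := le_max_right _ _
    have hun : u ≤ n := max_le (Real.rpow_le_self_of_one_le hn₁ (pow_le_one₀ hq₀.le hq₁.le)) hwn
    have hlogu : q ^ i * log n ≤ log u := by
      rw [← Real.log_rpow (by linarith)]
      exact Real.log_le_log (by positivity) (le_max_left _ _)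
    have hexp : K / log u ≤ i * (K / log w) :=
      (div_le_div_of_nonneg_left hK hlogw (Real.log_le_log (by linarith) hwu)).trans
        (le_mul_of_one_le_left (by positivity) (by exact_mod_cast hi))
    have hfactor : (log n / log u) ^ k * exp (K / log u) ≤ exp (i / 2) := by
      rw [← mul_one_div (i : ℝ) 2]
      exact div_pow_mul_exp_le hq₀ hlogn hlogu hexp hhalf
    rw [← hg.legendreProd_floor_max, ← hu]
    have := hratio w g hkw hg u n (h2w'.trans hwu) hun
    rw [Nat.floor_natCast] at this
    exact this.trans (by gcongr)

theorem prod_one_add_le_inv_legendreProd (hg₀ : ∀ p, 0 ≤ g p) (hg₁ : ∀ p, g p < 1) (n : ℕ) :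
    ∏ p ∈ Ioc 0 n, (1 + g p) ≤ (legendreProd g n)⁻¹ := by
  rw [legendreProd, ← prod_inv_distrib]
  refine prod_le_prod (fun p _ => by linarith [hg₀ p]) fun p _ => ?_
  rw [← one_div, le_div_iff₀ (sub_pos.2 (hg₁ p))]
  nlinarith [sq_nonneg (g p)]

theorem prod_le_rpow_of_mem_brunSets {q : ℝ} (hq₀ : 0 < q) (hq₁ : q < 1) {n : ℕ} (hn : 1 ≤ n)
    {S : Finset ℕ} (hS : S ∈ brunSets (fun i => ⌊(n : ℝ) ^ q ^ i⌋₊) n 0) :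
    ∏ p ∈ S, (p : ℝ) ≤ (n : ℝ) ^ ((1 + q) / (1 - q)) := by
  have hn₀ : (0 : ℝ) < n := by exact_mod_cast hn
  have hlevel : ∀ i, log (⌊(n : ℝ) ^ q ^ i⌋₊ : ℕ) ≤ q ^ i * log n := fun i => by
    rw [← Real.log_rpow hn₀]
    have hone : 1 ≤ (n : ℝ) ^ q ^ i := Real.one_le_rpow (by exact_mod_cast hn) (by positivity)
    exact Real.log_le_log (by exact_mod_cast Nat.floor_pos.2 hone) (Nat.floor_le (by positivity))
  have hsum := sum_log_le_of_mem_brunSets hq₀ hq₁ (Real.log_natCast_nonneg n) hlevel hS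
    (fun _ => by simp)
  have hexp : ∏ p ∈ S, (p : ℝ) = exp (∑ p ∈ S, log p) := by
    rw [Real.exp_sum]
    refine prod_congr rfl fun p hp => (Real.exp_log ?_).symm
    exact_mod_cast (mem_Ioc.1 ((mem_brunSets.1 hS).1 hp)).1
  rw [hexp, Real.rpow_def_of_pos hn₀, mul_comm]
  refine Real.exp_le_exp.2 (hsum.trans_eq ?_)
  norm_num

theorem isSieveDensity_count_div {A : ℕ → ℕ → Prop} [∀ p, DecidablePred (A p)]
    (hprime : ∀ p m, A p m → p.Prime ∧ w < p) (hcount : ∀ p, Nat.count (A p) p ≤ k) :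
    IsSieveDensity k w (fun p => (Nat.count (A p) p / p : ℝ)) where
  nonneg p := by positivity
  le_div p := by
    gcongr
    exact hcount p
  prime_and_lt p hp := by
    by_contra h
    exact hp (by rw [Nat.count_of_forall_not fun m _ hm => h (hprime p m hm)]; simp)

open Classical in
theorem mul_brunSum_sub_mul_prod_le_card {A : ℕ → ℕ → Prop} (hA : ∀ p, Periodic (A p) p)
    (hprime : ∀ p m, A p m → p.Prime) (hg : ∀ p, g p = Nat.count (A p) p / p) {y : ℕ → ℕ} {n : ℕ}
    {D : ℝ} (hD₀ : 0 ≤ D) (hD : ∀ S ∈ brunSets y n 0, ∏ p ∈ S, (p : ℝ) ≤ D) (X : ℕ) :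
    X * brunSum y g n 0 - D * ∏ p ∈ Ioc 0 n, (1 + g p)
      ≤ #{m ∈ range X | ∀ p ∈ Ioc 0 n, ¬ A p m} := by
  have hg₀ : ∀ p, 0 ≤ g p := fun p => by
    rw [hg]
    positivity
  have hR : ∀ S ∈ brunSets y n 0,
      |#{m ∈ range X | ∀ p ∈ S, A p m} - X * ∏ p ∈ S, g p| ≤ D * ∏ p ∈ S, g p := by
    intro S hS
    have hfactor : ∏ p ∈ S, (Nat.count (A p) p : ℝ) = (∏ p ∈ S, (p : ℝ)) * ∏ p ∈ S, g p := by
      rw [← prod_mul_distrib]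
      refine prod_congr rfl fun p hp => ?_
      rw [hg, mul_div_cancel₀]
      exact_mod_cast (mem_Ioc.1 ((mem_brunSets.1 hS).1 hp)).1.ne'
    have happrox := abs_count_forall_mem_sub_le hA hprime S X
    rw [hfactor, Nat.count_eq_card_filter_range fun m => ∀ p ∈ S, A p m] at happrox
    simp only [← hg] at happrox
    refine le_trans ?_ (happrox.trans
      (mul_le_mul_of_nonneg_right (hD S hS) (prod_nonneg fun p _ => hg₀ p)))
    apply le_of_eq
    congr!
  refine le_trans (sub_le_sub_left ?_ _) (mul_brunSum_sub_sum_le_card (range X) A hR)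
  rw [← mul_sum]
  exact mul_le_mul_of_nonneg_left (sum_brunSets_prod_le hg₀ n 0) hD₀

open Classical in
theorem exists_le_card_forall_not (hk : 1 ≤ k) :
    ∃ (w : ℕ) (c τ : ℝ), 0 < c ∧ 0 < τ ∧ τ < 4 * k + 1 ∧ ∀ A : ℕ → ℕ → Prop,
      (∀ p, Periodic (A p) p) → (∀ p m, A p m → p.Prime ∧ w < p) →
        (∀ p, Nat.count (A p) p ≤ k) → ∀ n ≥ w, ∀ X : ℕ,
          c * X / log n ^ k - c⁻¹ * n ^ τ * log n ^ k
            ≤ #{m ∈ range X | ∀ p ∈ Ioc 0 n, ¬ A p m} := by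
  obtain ⟨q, w, c, hq₀, hq₁, hlevel, hkw, h2w, hc, hbrun⟩ := exists_brun_levels hk
  have hτ : 0 < (1 + q) / (1 - q) := div_pos (by linarith) (by linarith)
  refine ⟨w, c / 20, (1 + q) / (1 - q), by positivity, hτ, hlevel,
    fun A hA hprime hcount n hn X => ?_⟩
  set g : ℕ → ℝ := fun p => (Nat.count (A p) p / p : ℝ)
  have hg : IsSieveDensity k w g := isSieveDensity_count_div hprime hcount
  have hg₁ := hg.lt_one hkw
  have hlogn : 0 < log n := Real.log_pos (by exact_mod_cast (by omega : 1 < n))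
  obtain ⟨hV, hratio⟩ := hbrun g hg n hn
  refine le_trans ?_ (mul_brunSum_sub_mul_prod_le_card hA (fun p m h => (hprime p m h).1)
    (fun _ => rfl) (by positivity)
    (fun S hS => prod_le_rpow_of_mem_brunSets hq₀ hq₁ (by omega) hS) X)
  refine sub_le_sub ?_ ?_
  · calc c / 20 * X / log n ^ k = X * (c / log n ^ k / 20) := by ring
      _ ≤ X * (legendreProd g n / 20) := by gcongr
      _ ≤ _ := by
        gcongr
        exact legendreProd_div_twenty_le_brunSum hg.nonneg hg₁ hratio
  · have hinv : (legendreProd g n)⁻¹ ≤ (c / 20)⁻¹ * log n ^ k := by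
      rw [← inv_inv (log n ^ k), ← mul_inv, ← div_eq_mul_inv]
      refine inv_anti₀ (by positivity) (le_trans ?_ hV)
      gcongr
      linarith
    rw [mul_comm (c / 20)⁻¹, mul_assoc]
    gcongr
    exact (prod_one_add_le_inv_legendreProd hg.nonneg hg₁ n).trans hinv

end SieveDensity

section PolynomialRoots

open Finset Polynomial
open Function (Periodic)

variable {f : ℤ[X]} {p : ℕ}

/-- The number of roots of `f` modulo `p`, for `p ≠ 0`. -/
noncomputable def rootCount (f : ℤ[X]) (p : ℕ) : ℕ :=
  Nat.count (fun m : ℕ => (p : ℤ) ∣ f.eval (m : ℤ)) p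

theorem dvd_eval_iff_of_dvd_sub (f : ℤ[X]) {d x y : ℤ} (h : d ∣ x - y) :
    d ∣ f.eval x ↔ d ∣ f.eval y :=
  dvd_iff_dvd_of_dvd_sub (h.trans (f.sub_dvd_eval_sub x y))

theorem periodic_dvd_eval (f : ℤ[X]) (p : ℕ) :
    Periodic (fun m : ℕ => (p : ℤ) ∣ f.eval (m : ℤ)) p := fun m =>
  propext (dvd_eval_iff_of_dvd_sub f (by simp))

theorem rootCount_lt (hp : 0 < p) (h : ∃ n : ℤ, ¬ (p : ℤ) ∣ f.eval n) : rootCount f p < p := by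
  refine lt_of_le_of_ne (Nat.count_le _) fun hall => ?_
  obtain ⟨n, hn⟩ := h
  have hp' : (0 : ℤ) < p := by exact_mod_cast hp
  have hnonneg := Int.emod_nonneg n hp'.ne'
  have hlt := Int.emod_lt_of_pos n hp'
  have hroot := Nat.count_iff_forall.1 hall (n % p).toNat (by omega)
  rw [Int.toNat_of_nonneg hnonneg] at hroot
  exact hn ((dvd_eval_iff_of_dvd_sub f Int.dvd_self_sub_emod).2 hroot)

theorem rootCount_le_natDegree (hp : p.Prime) (h : ∃ n : ℤ, ¬ (p : ℤ) ∣ f.eval n) :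
    rootCount f p ≤ f.natDegree := by
  have : Fact p.Prime := ⟨hp⟩
  set φ := Int.castRingHom (ZMod p)
  have heval : ∀ n : ℤ, (f.map φ).eval (n : ZMod p) = 0 ↔ (p : ℤ) ∣ f.eval n := fun n => by
    rw [← ZMod.intCast_zmod_eq_zero_iff_dvd, ← eq_intCast φ n, eval_map, eval₂_at_apply,
      eq_intCast]
  have hne : f.map φ ≠ 0 := fun hzero => by
    obtain ⟨n, hn⟩ := h
    exact hn ((heval n).1 (by rw [hzero, eval_zero]))
  calc rootCount f p ≤ #(f.map φ).roots.toFinset := by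
        rw [rootCount, Nat.count_eq_card_filter_range]
        refine card_le_card_of_injOn (fun m => (m : ZMod p)) (fun m hm => ?_)
          fun m hm n hn hmn => ?_
        · simp only [coe_filter, mem_range, Set.mem_ofPred_eq] at hm
          simpa [hne] using (heval m).2 hm.2
        · simp only [coe_filter, mem_range, Set.mem_ofPred_eq] at hm hn
          exact Nat.ModEq.eq_of_lt_of_lt ((ZMod.natCast_eq_natCast_iff m n p).1 hmn) hm.1 hn.1
    _ ≤ (f.map φ).natDegree := (Multiset.toFinset_card_le _).trans (card_roots' _)
    _ ≤ f.natDegree := natDegree_map_le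

theorem exists_forall_mem_not_dvd_eval (f : ℤ[X]) (S : Finset ℕ) (hS : ∀ p ∈ S, p.Prime)
    (h : ∀ p ∈ S, ∃ n : ℤ, ¬ (p : ℤ) ∣ f.eval n) :
    ∃ m : ℕ, ∀ p ∈ S, ¬ (p : ℤ) ∣ f.eval (m : ℤ) := by
  have hcount := count_forall_mem_prod (A := fun p m => ¬ (p : ℤ) ∣ f.eval (m : ℤ))
    (fun p => (periodic_dvd_eval f p).comp Not) S hS
  have hpos : 0 < ∏ p ∈ S, Nat.count (fun m : ℕ => ¬ (p : ℤ) ∣ f.eval (m : ℤ)) p := by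
    refine prod_pos fun p hp => ?_
    have hlt := rootCount_lt (hS p hp).pos (h p hp)
    have hadd := count_not_add_count (fun m : ℕ => (p : ℤ) ∣ f.eval (m : ℤ)) p
    rw [rootCount] at hlt
    omega
  obtain ⟨m, -, hm⟩ := Nat.count_ne_iff_exists.1 (hcount ▸ hpos).ne'
  exact ⟨m, hm⟩

theorem exists_not_dvd_eval_comp (hp : p.Prime) {W : ℤ} (hW : ¬ (p : ℤ) ∣ W) (r : ℤ)
    (h : ∃ n : ℤ, ¬ (p : ℤ) ∣ f.eval n) :
    ∃ n : ℤ, ¬ (p : ℤ) ∣ (f.comp (C W * X + C r)).eval n := by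
  obtain ⟨n, hn⟩ := h
  obtain ⟨u, v, huv⟩ := ((Nat.prime_iff_prime_int.1 hp).coprime_iff_not_dvd.2 hW)
  refine ⟨v * (n - r), fun hdvd => hn ((dvd_eval_iff_of_dvd_sub f ?_).1 (by simpa using hdvd))⟩
  exact ⟨-u * (n - r), by linear_combination (n - r) * huv⟩

theorem rootCount_comp_le (hp : p.Prime) {W : ℤ} (hW : ¬ (p : ℤ) ∣ W) (r : ℤ)
    (h : ∃ n : ℤ, ¬ (p : ℤ) ∣ f.eval n) :
    rootCount (f.comp (C W * X + C r)) p ≤ f.natDegree :=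
  (rootCount_le_natDegree hp (exists_not_dvd_eval_comp hp hW r h)).trans <|
    natDegree_comp_le.trans (mul_le_of_le_one_right' natDegree_linear_le)

end PolynomialRoots

section LinearForms

open Finset Polynomial

variable {ι : Type*} [Fintype ι]

/-- The product `∏ i, (a i * X + b i)` of integer linear forms. -/
noncomputable def linFormProd (a b : ι → ℤ) : ℤ[X] := ∏ i, (C (a i) * X + C (b i))

/-- The discriminant `Δ(F)` of `F = linFormProd a b`. -/
def linFormDisc [DecidableEq ι] (a b : ι → ℤ) : ℤ :=
  (∏ i, a i) * ∏ i, ∏ j ∈ univ.filter (fun j => j ≠ i), (a i * b j - b i * a j)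

theorem eval_linFormProd (a b : ι → ℤ) (n : ℤ) :
    (linFormProd a b).eval n = ∏ i, (a i * n + b i) := by
  simp [linFormProd, eval_prod]

theorem natDegree_linFormProd_le (a b : ι → ℤ) : (linFormProd a b).natDegree ≤ Fintype.card ι :=
  (natDegree_prod_le _ _).trans <|
    (sum_le_sum fun _ _ => natDegree_linear_le).trans_eq (by simp)

theorem card_le_rootCount_linFormProd [DecidableEq ι] {p : ℕ} (hp : p.Prime) {a b : ι → ℤ}
    (hdisc : ¬ (p : ℤ) ∣ linFormDisc a b) : Fintype.card ι ≤ rootCount (linFormProd a b) p := by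
  have : Fact p.Prime := ⟨hp⟩
  have ha : ∀ i, (a i : ZMod p) ≠ 0 := fun i hi =>
    hdisc ((((ZMod.intCast_zmod_eq_zero_iff_dvd _ p).1 hi).trans
      (dvd_prod_of_mem a (mem_univ i))).mul_right _)
  set r : ι → ZMod p := fun i => -(b i) / a i with hr
  have hroot : ∀ i, a i * r i + b i = 0 := fun i => by
    rw [hr, mul_div_cancel₀ _ (ha i), neg_add_cancel]
  have hinj : Function.Injective r := by
    intro i j hij
    by_contra hne
    refine hdisc (Dvd.dvd.mul_left ?_ _)
    have hdet : (p : ℤ) ∣ a i * b j - b i * a j := by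
      rw [← ZMod.intCast_zmod_eq_zero_iff_dvd]
      push_cast
      linear_combination (a i : ZMod p) * hroot j - (a j : ZMod p) * hroot i
        + (a i : ZMod p) * a j * hij
    exact (hdet.trans (dvd_prod_of_mem (fun j => a i * b j - b i * a j)
      (mem_filter.2 ⟨mem_univ j, fun h => hne h.symm⟩))).trans (dvd_prod_of_mem
        (fun i => ∏ j ∈ univ.filter (fun j => j ≠ i), (a i * b j - b i * a j)) (mem_univ i))
  rw [rootCount, Nat.count_eq_card_filter_range, ← card_univ]
  refine card_le_card_of_injOn (fun i => (r i).val) (fun i _ => ?_)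
    ((ZMod.val_injective p).comp hinj).injOn
  simp only [coe_filter, mem_range, Set.mem_ofPred_eq, eval_linFormProd]
  refine ⟨ZMod.val_lt _, Dvd.dvd.trans ?_ (dvd_prod_of_mem _ (mem_univ i))⟩
  rw [← ZMod.intCast_zmod_eq_zero_iff_dvd]
  push_cast
  rw [ZMod.natCast_zmod_val]
  exact hroot i

end LinearForms

section Primorial

theorem primor_pos (z : ℝ) : 0 < primor z :=
  Finset.prod_pos fun _ hp => (Finset.mem_filter.1 hp).2.pos

theorem dvd_primor_iff {p : ℕ} (hp : p.Prime) (z : ℝ) : p ∣ primor z ↔ p ≤ ⌊z⌋₊ := by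
  rw [primor, hp.prime.dvd_finsetProd_iff]
  constructor
  · rintro ⟨q, hq, hpq⟩
    rw [Finset.mem_filter, Finset.mem_range] at hq
    rw [(Nat.prime_dvd_prime_iff_eq hp hq.2).1 hpq]
    omega
  · exact fun h => ⟨p, Finset.mem_filter.2 ⟨Finset.mem_range.2 (by omega), hp⟩, dvd_rfl⟩

theorem int_gcd_primor_eq_one_iff (x : ℤ) (z : ℝ) :
    Int.gcd x (primor z) = 1 ↔ ∀ p : ℕ, p.Prime → p ≤ ⌊z⌋₊ → ¬ (p : ℤ) ∣ x := by
  rw [← not_iff_not, Int.gcd_eq_natAbs, Int.natAbs_natCast, ← Nat.coprime_iff_gcd_eq_one,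
    Nat.Prime.not_coprime_iff_dvd]
  simp only [Int.natCast_dvd, not_forall, not_not, exists_prop]
  exact exists_congr fun p => and_congr_right fun hp => by
    rw [dvd_primor_iff hp, and_comm]

end Primorial

section LowerBound

open Filter Finset Polynomial Real
open Function (Periodic)

theorem eventually_log_pow_le_mul_rpow (m : ℕ) {s ε : ℝ} (hs : 0 < s) (hε : 0 < ε) :
    ∀ᶠ x : ℝ in atTop, log x ^ m ≤ ε * x ^ s := by
  filter_upwards [(isLittleO_log_rpow_rpow_atTop (m : ℝ) hs).bound hε, eventually_ge_atTop 1]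
    with x hx hx1
  have hlog := log_nonneg hx1
  rwa [rpow_natCast, norm_of_nonneg (by positivity), norm_of_nonneg (by positivity)] at hx

theorem eventually_half_mul_div_log_pow_le_sub {c d σ : ℝ} (hc : 0 < c) (hd : 0 < d)
    (hσ : σ < 1) (k : ℕ) :
    ∀ᶠ x : ℝ in atTop,
      c / 2 * x / log x ^ k ≤ c * x / log x ^ k - d * x ^ σ * log x ^ k := by
  filter_upwards [eventually_log_pow_le_mul_rpow (2 * k) (sub_pos.2 hσ)
    (show 0 < c / (2 * d) by positivity), eventually_gt_atTop 1] with x hx hx1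
  have hlog := log_pos hx1
  have hx0 : 0 < x := by linarith
  have herror : d * x ^ σ * log x ^ k ≤ c / 2 * x / log x ^ k := by
    rw [le_div_iff₀ (by positivity)]
    calc d * x ^ σ * log x ^ k * log x ^ k = d * x ^ σ * log x ^ (2 * k) := by ring
      _ ≤ d * x ^ σ * (c / (2 * d) * x ^ (1 - σ)) := by gcongr
      _ = c / 2 * (x ^ σ * x ^ (1 - σ)) := by field_simp
      _ = c / 2 * x := by rw [← rpow_add hx0, add_sub_cancel, rpow_one]
  have hhalves : c * x / log x ^ k = c / 2 * x / log x ^ k + c / 2 * x / log x ^ k := by ring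
  linarith

theorem exists_pos_forall_not_dvd_eval {f : ℤ[X]}
    (hadm : ∀ p : ℕ, p.Prime → ∃ n : ℤ, ¬ (p : ℤ) ∣ f.eval n) (w : ℕ) :
    ∃ r : ℕ, 0 < r ∧ ∀ p : ℕ, p.Prime → p ≤ w → ¬ (p : ℤ) ∣ f.eval (r : ℤ) := by
  obtain ⟨β, hβ⟩ := exists_forall_mem_not_dvd_eval f {p ∈ range (w + 1) | p.Prime}
    (fun p hp => (mem_filter.1 hp).2) fun p hp => hadm p (mem_filter.1 hp).2
  refine ⟨β + primor w, Nat.add_pos_right β (primor_pos w), fun p hp hpw => ?_⟩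
  rw [dvd_eval_iff_of_dvd_sub f (y := (β : ℤ))]
  · exact hβ p (mem_filter.2 ⟨mem_range.2 (by omega), hp⟩)
  · simpa using Int.natCast_dvd_natCast.2 ((dvd_primor_iff hp w).2 (by simpa using hpw))

/-- The relation between `p` and `m` that sifts the progression `r + W * m` by the primes `p > w`
dividing the value of `f`; with `W` divisible by the primes up to `w`, these are the only primes
whose behaviour depends on `m`. -/
def LargePrimeDvdEval (f : ℤ[X]) (w W r p m : ℕ) : Prop :=
  p.Prime ∧ w < p ∧ (p : ℤ) ∣ f.eval ((r + W * m : ℕ) : ℤ)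

theorem periodic_largePrimeDvdEval (f : ℤ[X]) (w W r p : ℕ) :
    Periodic (LargePrimeDvdEval f w W r p) p := fun m =>
  propext <| and_congr_right fun _ => and_congr_right fun _ => dvd_eval_iff_of_dvd_sub f
    ⟨W, by push_cast; ring⟩

open Classical in
theorem count_largePrimeDvdEval_le {f : ℤ[X]} {k w W : ℕ} (hdeg : f.natDegree ≤ k)
    (hadm : ∀ p : ℕ, p.Prime → ∃ n : ℤ, ¬ (p : ℤ) ∣ f.eval n)
    (hW : ∀ p, p.Prime → w < p → ¬ p ∣ W) (r p : ℕ) :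
    Nat.count (LargePrimeDvdEval f w W r p) p ≤ k := by
  by_cases hp : p.Prime ∧ w < p
  · have hpW : ¬ (p : ℤ) ∣ W := fun h => hW p hp.1 hp.2 (Int.natCast_dvd_natCast.1 h)
    refine le_trans ?_ ((rootCount_comp_le hp.1 hpW r (hadm p hp.1)).trans hdeg)
    exact Nat.count_mono_left fun m _ h => by simpa [add_comm] using h.2.2
  · refine (Nat.count_mono_left (q := fun _ => False) fun m _ h => hp ⟨h.1, h.2.1⟩).trans ?_
    exact (Nat.count_false p).trans_le (Nat.zero_le k)

open Classical in
theorem card_not_largePrimeDvdEval_le_card_SFset {f : ℤ[X]} {w W r : ℕ} (hW : 0 < W)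
    (hdvd : ∀ p, p.Prime → p ≤ w → p ∣ W) (hr : 0 < r)
    (hf : ∀ p : ℕ, p.Prime → p ≤ w → ¬ (p : ℤ) ∣ f.eval (r : ℤ)) {N T : ℕ}
    (hN : r + W * T ≤ N) (z : ℝ) :
    #{m ∈ range T | ∀ p ∈ Ioc 0 ⌊z⌋₊, ¬ LargePrimeDvdEval f w W r p m} ≤
      #(SFset (fun n => f.eval n) N z) := by
  refine card_le_card_of_injOn (fun m => r + W * m) (fun m hm => ?_) fun m _ n _ hmn =>
    Nat.eq_of_mul_eq_mul_left hW (add_left_cancel hmn)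
  simp only [coe_filter, mem_range, Set.mem_ofPred_eq] at hm
  have hmN : r + W * m ≤ N := hN.trans' (by gcongr; exact hm.1.le)
  refine mem_filter.2 ⟨mem_Icc.2 ⟨Nat.add_pos_left hr _, hmN⟩, ?_⟩
  refine (int_gcd_primor_eq_one_iff _ z).2 fun p hp hpz hroot => ?_
  rcases le_or_gt p w with hpw | hpw
  · refine hf p hp hpw ((dvd_eval_iff_of_dvd_sub f ?_).1 hroot)
    push_cast
    rw [add_sub_cancel_left]
    exact (Int.natCast_dvd_natCast.2 (hdvd p hp hpw)).mul_right m
  · exact hm.2 p (mem_Ioc.2 ⟨hp.pos, hpz⟩) ⟨hp, hpw, hroot⟩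

theorem exists_mul_div_log_pow_sub_le_card_SFset {k : ℕ} (hk : 1 ≤ k) {f : ℤ[X]}
    (hdeg : f.natDegree ≤ k) (hadm : ∀ p : ℕ, p.Prime → ∃ n : ℤ, ¬ (p : ℤ) ∣ f.eval n) :
    ∃ c τ : ℝ, 0 < c ∧ τ < 4 * k + 1 ∧ ∃ N₀ : ℕ, ∀ N ≥ N₀, ∀ z : ℝ, N₀ ≤ z →
      c * N / log z ^ k - c⁻¹ * z ^ τ * log z ^ k ≤ #(SFset (fun n => f.eval n) N z) := by
  obtain ⟨w, c, τ, hc, hτ, hτk, hsieve⟩ := exists_le_card_forall_not hk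
  set W := primor w
  have hW : 0 < W := primor_pos w
  have hdvdW : ∀ p, p.Prime → (p ∣ W ↔ p ≤ w) := fun p hp => by
    rw [dvd_primor_iff hp, Nat.floor_natCast]
  obtain ⟨γ, hγ0, hγ⟩ := exists_pos_forall_not_dvd_eval hadm w
  refine ⟨c / (2 * W), τ, by positivity, hτk, 2 * (γ + W) + w + 2, fun N hN z hz => ?_⟩
  push_cast at hz
  set n := ⌊z⌋₊
  have hwn : w + 2 ≤ n := Nat.le_floor (by push_cast; linarith)
  set T := (N - γ) / W with hT
  have hWT : W * T ≤ N - γ := Nat.mul_div_le _ _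
  have hNT : (N : ℝ) / (2 * W) ≤ T := by
    have hlt := Nat.lt_mul_div_succ (N - γ) hW
    rw [← hT, mul_add] at hlt
    rw [div_le_iff₀ (by positivity)]
    exact_mod_cast (show N ≤ T * (2 * W) by rw [mul_left_comm, mul_comm T W]; omega)
  have hsifted := hsieve (LargePrimeDvdEval f w W γ) (periodic_largePrimeDvdEval f w W γ)
    (fun p m h => ⟨h.1, h.2.1⟩)
    (count_largePrimeDvdEval_le hdeg hadm
      (fun p hp hpw h => hpw.not_ge ((hdvdW p hp).1 h)) γ) n (by omega) T
  have hcard := card_not_largePrimeDvdEval_le_card_SFset hW (fun p hp => (hdvdW p hp).2) hγ0 hγ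
    (show γ + W * T ≤ N by omega) z
  have hz0 : 0 < z := by linarith
  have hnz : (n : ℝ) ≤ z := Nat.floor_le hz0.le
  have hn : (2 : ℝ) ≤ n := by exact_mod_cast (show 2 ≤ n by omega)
  have hlogn : 0 < log n := log_pos (by linarith)
  have hW1 : (1 : ℝ) ≤ W := by exact_mod_cast hW
  calc c / (2 * W) * N / log z ^ k - (c / (2 * W))⁻¹ * z ^ τ * log z ^ k
      ≤ c / (2 * W) * N / log n ^ k - c⁻¹ * (n : ℝ) ^ τ * log n ^ k := by
        gcongr
        exact div_le_self hc.le (show (1 : ℝ) ≤ 2 * W by linarith)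
    _ = c * (N / (2 * W)) / log n ^ k - c⁻¹ * (n : ℝ) ^ τ * log n ^ k := by ring
    _ ≤ c * T / log n ^ k - c⁻¹ * (n : ℝ) ^ τ * log n ^ k := by gcongr
    _ ≤ _ := hsifted.trans (Nat.cast_le.2 hcard)

theorem exists_mul_div_log_pow_le_card_SFset {k : ℕ} (hk : 1 ≤ k) {f : ℤ[X]}
    (hdeg : f.natDegree ≤ k) (hadm : ∀ p : ℕ, p.Prime → ∃ n : ℤ, ¬ (p : ℤ) ∣ f.eval n) :
    ∃ c : ℝ, 0 < c ∧ ∀ᶠ N : ℕ in atTop,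
      c * N / log N ^ k ≤
        #(SFset (fun n => f.eval n) N ((N : ℝ) ^ ((1 : ℝ) / (4 * k + 1)))) := by
  obtain ⟨c, τ, hc, hτk, N₀, hsieve⟩ := exists_mul_div_log_pow_sub_le_card_SFset hk hdeg hadm
  set e : ℝ := (1 : ℝ) / (4 * k + 1) with he
  have he0 : 0 < e := by positivity
  have heτ : e * τ < 1 := by rwa [he, one_div_mul_eq_div, div_lt_one (by positivity)]
  have he1 : e ≤ 1 := by
    rw [he, div_le_one (by positivity), le_add_iff_nonneg_left]
    positivity
  have hlevel : Tendsto (fun N : ℕ => (N : ℝ) ^ e) atTop atTop :=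
    (tendsto_rpow_atTop he0).comp tendsto_natCast_atTop_atTop
  refine ⟨c / 2, by positivity, ?_⟩
  filter_upwards [hlevel.eventually_ge_atTop (N₀ : ℝ),
    tendsto_natCast_atTop_atTop.eventually
      (eventually_half_mul_div_log_pow_le_sub hc (inv_pos.2 hc) heτ k),
    eventually_ge_atTop N₀, eventually_gt_atTop 1] with N hlarge herror hN hN1
  have hlogN : 0 < log N := log_pos (by exact_mod_cast hN1)
  have hlog : log ((N : ℝ) ^ e) = e * log N := log_rpow (by positivity) e
  calc c / 2 * N / log N ^ k
      ≤ c * N / log N ^ k - c⁻¹ * (N : ℝ) ^ (e * τ) * log N ^ k := herror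
    _ ≤ c * N / log ((N : ℝ) ^ e) ^ k - c⁻¹ * ((N : ℝ) ^ e) ^ τ * log ((N : ℝ) ^ e) ^ k := by
        rw [hlog, rpow_mul (by positivity)]
        gcongr <;> exact mul_le_of_le_one_left hlogN.le he1
    _ ≤ _ := hsieve N hN _ hlarge

end LowerBound

section UpperBound

open Filter Finset Polynomial Real

theorem card_gcd_eval_primor_eq_prod (f : ℤ[X]) (z : ℝ) :
    #((range (primor z)).filter fun m : ℕ => Int.gcd (f.eval (m : ℤ)) (primor z) = 1) =
      ∏ p ∈ range (⌊z⌋₊ + 1) with p.Prime,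
        Nat.count (fun m : ℕ => ¬ (p : ℤ) ∣ f.eval (m : ℤ)) p := by
  rw [← count_forall_mem_prod (A := fun p m => ¬ (p : ℤ) ∣ f.eval (m : ℤ))
    (fun p => (periodic_dvd_eval f p).comp Not) _ fun p hp => (mem_filter.1 hp).2,
    Nat.count_eq_card_filter_range, ← primor]
  refine congrArg card (filter_congr fun m _ => ?_)
  rw [int_gcd_primor_eq_one_iff]
  refine forall_congr' fun p => ?_
  rw [mem_filter, mem_range, Nat.lt_succ_iff]
  tauto

theorem count_not_dvd_eval_le_mul_exp {f : ℤ[X]} {k p : ℕ} (hp : 0 < p)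
    (hk : k ≤ rootCount f p) :
    (Nat.count (fun m : ℕ => ¬ (p : ℤ) ∣ f.eval (m : ℤ)) p : ℝ) ≤ p * exp (-(k * (1 / p))) := by
  have hadd := count_not_add_count (fun m : ℕ => (p : ℤ) ∣ f.eval (m : ℤ)) p
  rw [rootCount] at hk
  have hle : (Nat.count (fun m : ℕ => ¬ (p : ℤ) ∣ f.eval (m : ℤ)) p : ℝ) + k ≤ p := by
    exact_mod_cast (by omega)
  calc (Nat.count (fun m : ℕ => ¬ (p : ℤ) ∣ f.eval (m : ℤ)) p : ℝ)
      ≤ p * (-(k * (1 / p)) + 1) := by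
        rw [mul_add, mul_neg, mul_one_div, mul_div_cancel₀ _ (Nat.cast_ne_zero.2 hp.ne')]
        linarith
    _ ≤ _ := by
        gcongr
        exact add_one_le_exp _

theorem card_gcd_eval_primor_le_mul_exp {f : ℤ[X]} {k u : ℕ}
    (hroot : ∀ p : ℕ, p.Prime → u < p → k ≤ rootCount f p) (z : ℝ) :
    (#((range (primor z)).filter fun m : ℕ => Int.gcd (f.eval (m : ℤ)) (primor z) = 1) : ℝ) ≤
      primor z * exp (-(k * ∑ p ∈ Ioc u ⌊z⌋₊ with p.Prime, 1 / (p : ℝ))) := by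
  have hfactor : ∀ p ∈ {p ∈ range (⌊z⌋₊ + 1) | p.Prime},
      (Nat.count (fun m : ℕ => ¬ (p : ℤ) ∣ f.eval (m : ℤ)) p : ℝ) ≤
        p * if u < p then exp (-(k * (1 / p))) else 1 := fun p hp => by
    have hprime := (mem_filter.1 hp).2
    split_ifs with hup
    · exact count_not_dvd_eval_le_mul_exp hprime.pos (hroot p hprime hup)
    · rw [mul_one]
      exact Nat.cast_le.2 (Nat.count_le _)
  rw [card_gcd_eval_primor_eq_prod, Nat.cast_prod]
  refine (prod_le_prod (fun p _ => by positivity) hfactor).trans_eq ?_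
  rw [prod_mul_distrib, primor, Nat.cast_prod, ← prod_filter, mul_sum, ← sum_neg_distrib, exp_sum,
    filter_filter]
  refine congrArg _ (prod_congr (ext fun p => ?_) fun _ _ => rfl)
  simp only [mem_filter, mem_range, mem_Ioc, Nat.lt_succ_iff]
  tauto

theorem exists_card_gcd_eval_primor_le {f : ℤ[X]} {k B : ℕ}
    (hroot : ∀ p : ℕ, p.Prime → B < p → k ≤ rootCount f p) :
    ∃ C : ℝ, 0 < C ∧ ∀ z : ℝ, C ≤ z →
      (#((range (primor z)).filter fun m : ℕ => Int.gcd (f.eval (m : ℤ)) (primor z) = 1) : ℝ) ≤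
        C * primor z / log z ^ k := by
  obtain ⟨K, hK⟩ := exists_abs_sum_inv_prime_sub_log_log_le
  set u := B + 2 with hu
  set s := log (log u) + K / log u
  refine ⟨max (exp (k * s)) u, by positivity, fun z hz => ?_⟩
  have hu2 : (2 : ℝ) ≤ u := by
    rw [hu]
    push_cast
    linarith [(B.cast_nonneg : (0 : ℝ) ≤ B)]
  have huz : (u : ℝ) ≤ z := (le_max_right _ _).trans hz
  have hlog : 0 < log z := log_pos (by linarith)
  have hmertens : log (log z) - s ≤ ∑ p ∈ Ioc u ⌊z⌋₊ with p.Prime, 1 / (p : ℝ) := by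
    have := (abs_le.1 (hK u z hu2 huz)).1
    rw [Nat.floor_natCast] at this
    linarith
  calc _ ≤ primor z * exp (-(k * ∑ p ∈ Ioc u ⌊z⌋₊ with p.Prime, 1 / (p : ℝ))) :=
        card_gcd_eval_primor_le_mul_exp (fun p hp hup => hroot p hp (by omega)) z
    _ ≤ primor z * exp (k * s - k * log (log z)) := by
        gcongr
        linarith [mul_le_mul_of_nonneg_left hmertens k.cast_nonneg]
    _ = exp (k * s) * primor z / log z ^ k := by
        rw [exp_sub, exp_nat_mul (log (log z)), exp_log hlog]
        ring
    _ ≤ _ := by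
        gcongr
        exact le_max_left _ _

theorem half_log_le_log_div_three {x : ℝ} (hx : 9 ≤ x) : log x / 2 ≤ log (x / 3) := by
  have hsq : log x ≤ log ((x / 3) ^ 2) := log_le_log (by linarith) (by nlinarith)
  rw [log_pow] at hsq
  push_cast at hsq
  linarith

theorem exists_card_gcd_eval_primor_log_div_three_le {f : ℤ[X]} {k B : ℕ}
    (hroot : ∀ p : ℕ, p.Prime → B < p → k ≤ rootCount f p) :
    ∃ C : ℝ, 0 < C ∧ ∀ᶠ x : ℝ in atTop,
      (#((range (primor (log x / 3))).filter fun m : ℕ =>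
        Int.gcd (f.eval (m : ℤ)) (primor (log x / 3)) = 1) : ℝ) ≤
        C * primor (log x / 3) / log (log x) ^ k := by
  obtain ⟨C, hC, hcard⟩ := exists_card_gcd_eval_primor_le hroot
  refine ⟨C * 2 ^ k, by positivity, ?_⟩
  filter_upwards [tendsto_log_atTop.eventually_ge_atTop (3 * C + 9)] with x hx
  have hloglog : 0 < log (log x) := log_pos (by linarith)
  calc _ ≤ C * primor (log x / 3) / log (log x / 3) ^ k := hcard _ (by linarith)
    _ ≤ C * primor (log x / 3) / (log (log x) / 2) ^ k := by
        gcongr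
        exact half_log_le_log_div_three (by linarith)
    _ = C * 2 ^ k * primor (log x / 3) / log (log x) ^ k := by
        rw [div_pow]
        field_simp

end UpperBound

section WTrick

open Filter Finset Polynomial Real

theorem gcd_eval_mod_primor_eq_one {f : ℤ[X]} {n : ℕ} {y z : ℝ} (hyz : y ≤ z)
    (h : Int.gcd (f.eval (n : ℤ)) (primor z) = 1) :
    Int.gcd (f.eval ((n % primor y : ℕ) : ℤ)) (primor y) = 1 := by
  rw [int_gcd_primor_eq_one_iff] at h ⊢
  refine fun p hp hpy hroot => h p hp (hpy.trans (Nat.floor_le_floor hyz)) ?_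
  refine (dvd_eval_iff_of_dvd_sub f ?_).1 hroot
  rw [Int.natCast_mod]
  exact (Int.natCast_dvd_natCast.2 ((dvd_primor_iff hp y).2 hpy)).trans
    (dvd_sub_comm.1 Int.dvd_self_sub_emod)

theorem exists_card_residue_class_ge {k : ℕ} (hk : 1 ≤ k) {f : ℤ[X]} (hdeg : f.natDegree ≤ k)
    (hadm : ∀ p : ℕ, p.Prime → ∃ n : ℤ, ¬ (p : ℤ) ∣ f.eval n) {B : ℕ}
    (hroot : ∀ p : ℕ, p.Prime → B < p → k ≤ rootCount f p) :
    ∃ c : ℝ, 0 < c ∧ ∀ᶠ N : ℕ in atTop,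
      ∀ A ⊆ SFset (fun n => f.eval n) N ((N : ℝ) ^ ((1 : ℝ) / (4 * k + 1))), ∀ δ : ℝ, 0 < δ →
        (#A : ℝ) = δ * #(SFset (fun n => f.eval n) N ((N : ℝ) ^ ((1 : ℝ) / (4 * k + 1)))) →
        ∃ r < primor (log N / 3), Int.gcd (f.eval (r : ℤ)) (primor (log N / 3)) = 1 ∧
          c * δ * log (log N) ^ k / log N ^ k * N / primor (log N / 3) ≤
            #{n ∈ A | n % primor (log N / 3) = r} := by
  obtain ⟨c, hc, hlower⟩ := exists_mul_div_log_pow_le_card_SFset hk hdeg hadm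
  obtain ⟨C, hC, hupper⟩ := exists_card_gcd_eval_primor_log_div_three_le hroot
  refine ⟨c / C, by positivity, ?_⟩
  have hlevel := tendsto_natCast_atTop_atTop.eventually (eventually_log_pow_le_mul_rpow 1
    (show 0 < (1 : ℝ) / (4 * k + 1) by positivity) one_pos)
  filter_upwards [hlower, hlevel, tendsto_natCast_atTop_atTop.eventually hupper,
    (tendsto_log_atTop.comp tendsto_natCast_atTop_atTop).eventually_gt_atTop 1,
    eventually_gt_atTop 0] with N hSF hlevel hG hlog hN A hA δ hδ hcard
  rw [pow_one, one_mul] at hlevel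
  rw [Function.comp_apply] at hlog
  have hloglog : 0 < log (log N) := log_pos hlog
  have hzN : log N / 3 ≤ (N : ℝ) ^ ((1 : ℝ) / (4 * k + 1)) := by linarith
  set z := log N / 3
  set G := (range (primor z)).filter fun m : ℕ => Int.gcd (f.eval (m : ℤ)) (primor z) = 1
  have hM : 0 < (primor z : ℝ) := Nat.cast_pos.2 (primor_pos z)
  have hmaps : ∀ n ∈ A, n % primor z ∈ G := fun n hn =>
    mem_filter.2 ⟨mem_range.2 (Nat.mod_lt n (primor_pos z)),
      gcd_eval_mod_primor_eq_one hzN (mem_filter.1 (hA hn)).2⟩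
  have hlowerA : δ * (c * N / log N ^ k) ≤ #A := by
    rw [hcard]
    gcongr
  obtain ⟨n, hn⟩ : A.Nonempty := card_pos.1 (Nat.cast_pos.1 (hlowerA.trans_lt' (by positivity)))
  set T := c / C * δ * log (log N) ^ k / log N ^ k * N / primor z with hT
  have hpigeon : #G • T ≤ #A := calc
    #G • T ≤ C * primor z / log (log N) ^ k * T := by
        rw [nsmul_eq_mul]
        gcongr
    _ = δ * (c * N / log N ^ k) := by
        rw [hT]
        field_simp
    _ ≤ #A := hlowerA
  obtain ⟨r, hr, hle⟩ :=
    exists_le_card_fiber_of_nsmul_le_card_of_maps_to hmaps ⟨_, hmaps n hn⟩ hpigeon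
  exact ⟨r, mem_range.1 (mem_filter.1 hr).1, (mem_filter.1 hr).2, hle⟩

end WTrick

theorem stmt1
    (k : ℕ) (hk : 1 ≤ k) (a b : Fin k → ℤ) (ha : ∀ i, a i ≠ 0)
    (F : ℤ → ℤ) (hF : ∀ n : ℤ, F n = ∏ i, (a i * n + b i))
    (hdisc : (∏ i, a i) *
      ∏ i, ∏ j ∈ Finset.univ.filter (fun j => j ≠ i), (a i * b j - b i * a j) ≠ 0)
    (hadm : ∀ p : ℕ, p.Prime → ∃ n : ℤ, ¬ ((p : ℤ) ∣ F n)) :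
    ∃ (c : ℝ) (N₀ : ℕ), 0 < c ∧
      ∀ N : ℕ, N₀ ≤ N →
        ∀ A : Finset ℕ, A ⊆ SFset F N ((N : ℝ) ^ ((1 : ℝ) / (4 * k + 1))) →
          ∀ δ : ℝ, 0 < δ →
            (A.card : ℝ) =
              δ * ((SFset F N ((N : ℝ) ^ ((1 : ℝ) / (4 * k + 1)))).card : ℝ) →
            ∃ b₀ : ℕ, b₀ < primor (Real.log N / 3) ∧
              Int.gcd (F b₀) (primor (Real.log N / 3)) = 1 ∧
              c * δ * (Real.log (Real.log N)) ^ k / (Real.log N) ^ k *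
                  (N : ℝ) / (primor (Real.log N / 3) : ℝ)
                ≤ ((A.filter (fun n => n % primor (Real.log N / 3) = b₀)).card : ℝ) := by
  obtain rfl : F = fun n => (linFormProd a b).eval n :=
    funext fun n => (hF n).trans (eval_linFormProd a b n).symm
  have hdeg : (linFormProd a b).natDegree ≤ k :=
    (natDegree_linFormProd_le a b).trans_eq (Fintype.card_fin k)
  have hroot : ∀ p : ℕ, p.Prime → (linFormDisc a b).natAbs < p →
      k ≤ rootCount (linFormProd a b) p := fun p hp hlarge => by
    have hndvd : ¬ (p : ℤ) ∣ linFormDisc a b := fun h =>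
      hlarge.not_ge (Nat.le_of_dvd (Int.natAbs_pos.2 hdisc) (Int.natCast_dvd.1 h))
    exact (Fintype.card_fin k).ge.trans (card_le_rootCount_linFormProd hp hndvd)
  obtain ⟨c, hc, hclass⟩ := exists_card_residue_class_ge hk hdeg hadm hroot
  obtain ⟨N₀, hN₀⟩ := Filter.eventually_atTop.1 hclass
  exact ⟨c, N₀, hc, hN₀⟩
end

section
/- Let m ≥ 1 be an integer and let c_1 > 0 and 0 < c < 1 be real numbers. There exists a constant c_2 > 0 depending only on m, c_1 and c such that for every natural number N' ≥ 16 and every polynomial G(X) = ∏_{i=1}^m (e_i X + d_i) with integers e_i, d_i satisfying |e_i| + |d_i| ≤ c_1·N'^{100} and Δ(G) = ∏_{i=1}^m e_i · ∏_{i≠j}(e_i d_j − e_j d_i) ≠ 0, one has |{n ∈ ℕ : n ≤ N' and gcd(G(n), ∏_{p ≤ N'^c, p prime} p) = 1}| ≤ c_2 · N' · (log log N')^m / (log N')^m. -/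
/-!
If a prime `p` does not divide `Δ(G)`, then `G` has exactly `m` roots modulo `p`, and a counted `n`
avoids all of them once `p ≤ N' ^ c`. Such `n` are bounded by a large sieve inequality in which the
additive characters are replaced by real `p`-periodic functions of mean zero, constant off the
sifted classes: their products over squarefree moduli `d ≤ Q` are nearly orthogonal on `[0, N']`,
while on the sifted set they all take their largest possible values. If only primes up to a small
power `z` of `N'` are used, Markov's inequality allows the truncation `d ≤ Q` to be dropped, which
gives the bound `O(N' ∏ p, (1 - m / p))`.

The primes up to `z` would make the product `O((log N')⁻ᵐ)`. Discarding the primes up to a multiple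
of `log N'` costs a factor `(log log N')ᵐ` by Mertens' estimates, and discarding the larger primes
dividing `Δ(G)` costs only a bounded factor: as `log |Δ(G)| = O(log N')`, their reciprocals have
bounded sum.
-/

open Finset Real

section PeriodicSums

lemma sum_range_mul_add_of_periodic {M : Type*} [AddCommMonoid M] {g : ℕ → M} {a : ℕ}
    (hg : Function.Periodic g a) (q r : ℕ) :
    ∑ n ∈ range (a * q + r), g n = q • ∑ n ∈ range a, g n + ∑ n ∈ range r, g n := by
  induction q with
  | zero => simp
  | succ q ih =>
    have hshift (n : ℕ) : g (a + n) = g n := by rw [add_comm, hg]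
    rw [show a * (q + 1) + r = a + (a * q + r) by ring, sum_range_add]
    simp only [hshift, ih]
    rw [succ_nsmul', add_assoc]

lemma sum_range_le_of_periodic_of_nonneg {g : ℕ → ℝ} {a : ℕ} (ha : 0 < a)
    (hg : Function.Periodic g a) (hg0 : ∀ n, 0 ≤ g n) (N : ℕ) :
    ∑ n ∈ range N, g n ≤ (N / a + 1) * ∑ n ∈ range a, g n := by
  have hcover : N ≤ a * (N / a + 1) + 0 := (Nat.lt_mul_div_succ N ha).le
  calc ∑ n ∈ range N, g n ≤ ∑ n ∈ range (a * (N / a + 1) + 0), g n :=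
        sum_le_sum_of_subset_of_nonneg (range_subset_range.2 hcover) fun _ _ _ => hg0 _
    _ = (↑(N / a) + 1) * ∑ n ∈ range a, g n := by
        rw [sum_range_mul_add_of_periodic hg]; simp
    _ ≤ (N / a + 1) * ∑ n ∈ range a, g n := by
        gcongr
        · exact sum_nonneg fun _ _ => hg0 _
        · exact Nat.cast_div_le

lemma sum_range_le_of_periodic_of_sum_eq_zero {g : ℕ → ℝ} {a : ℕ} (ha : 0 < a)
    (hg : Function.Periodic g a) (hg0 : ∑ n ∈ range a, g n = 0) (hg1 : ∀ n, g n ≤ 1) (N : ℕ) :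
    ∑ n ∈ range N, g n ≤ a :=
  calc ∑ n ∈ range N, g n = ∑ n ∈ range (N % a), g n := by
        rw [← Nat.div_add_mod N a, sum_range_mul_add_of_periodic hg, hg0, smul_zero, zero_add,
          Nat.mul_add_mod, Nat.mod_mod]
    _ ≤ ∑ _ ∈ range (N % a), (1 : ℝ) := sum_le_sum fun n _ => hg1 n
    _ = (N % a : ℕ) := by simp
    _ ≤ a := by exact_mod_cast (Nat.mod_lt N ha).le

lemma periodic_prod_of_forall_periodic {ι R : Type*} [CommMonoid R] {s : Finset ι} {a : ι → ℕ}
    {g : ι → ℕ → R} (hg : ∀ i ∈ s, Function.Periodic (g i) (a i)) :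
    Function.Periodic (fun n => ∏ i ∈ s, g i n) (∏ i ∈ s, a i) := by
  refine fun n => prod_congr rfl fun i hi => ?_
  obtain ⟨k, hk⟩ := dvd_prod_of_mem a hi
  rw [hk, mul_comm]
  exact (hg i hi).nat_mul k n

variable {R : Type*} [CommSemiring R]

lemma sum_range_mul_of_coprime {f g : ℕ → R} {a b : ℕ} (hab : a.Coprime b)
    (hf : Function.Periodic f a) (hg : Function.Periodic g b) :
    ∑ n ∈ range (a * b), f n * g n = (∑ n ∈ range a, f n) * ∑ n ∈ range b, g n := by
  rcases eq_or_ne a 0 with rfl | ha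
  · simp
  rcases eq_or_ne b 0 with rfl | hb
  · simp
  rw [sum_mul_sum, ← sum_product']
  refine sum_bij' (fun n _ => (n % a, n % b)) (fun x _ => (Nat.chineseRemainder hab x.1 x.2 : ℕ))
    ?_ ?_ ?_ ?_ ?_
  · intro n _
    simp [Nat.mod_lt, Nat.pos_of_ne_zero, ha, hb]
  · intro x _
    exact mem_range.2 (Nat.chineseRemainder_lt_mul hab _ _ ha hb)
  · intro n hn
    have hmod := Nat.chineseRemainder_modEq_unique hab
      (Nat.mod_modEq n a).symm (Nat.mod_modEq n b).symm
    exact (hmod.eq_of_lt_of_lt (mem_range.1 hn)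
      (Nat.chineseRemainder_lt_mul hab _ _ ha hb)).symm
  · intro x hx
    obtain ⟨hx₁, hx₂⟩ := mem_product.1 hx
    have hmod := (Nat.chineseRemainder hab x.1 x.2).2
    exact Prod.ext (Nat.mod_eq_of_modEq hmod.1 (mem_range.1 hx₁))
      (Nat.mod_eq_of_modEq hmod.2 (mem_range.1 hx₂))
  · intro n _
    rw [hf.map_mod_nat, hg.map_mod_nat]

lemma sum_range_prod_of_pairwise_coprime {ι : Type*} {s : Finset ι} {a : ι → ℕ} {g : ι → ℕ → R}
    (ha : (s : Set ι).Pairwise (Function.onFun Nat.Coprime a))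
    (hg : ∀ i ∈ s, Function.Periodic (g i) (a i)) :
    ∑ n ∈ range (∏ i ∈ s, a i), ∏ i ∈ s, g i n = ∏ i ∈ s, ∑ n ∈ range (a i), g i n := by
  classical
  induction s using Finset.induction_on with
  | empty => simp
  | insert i s hi ih =>
    rw [forall_mem_insert] at hg
    have hcop : (a i).Coprime (∏ j ∈ s, a j) := Nat.Coprime.prod_right fun j hj =>
      ha (mem_insert_self i s) (mem_insert_of_mem hj) (ne_of_mem_of_not_mem hj hi).symm
    simp only [prod_insert hi]
    rw [sum_range_mul_of_coprime hcop hg.1 (periodic_prod_of_forall_periodic hg.2),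
      ih (ha.mono (coe_subset.2 (subset_insert i s))) hg.2]

end PeriodicSums

section SieveSupport

/-- The subsets of `P` with product at most `Q`. For a set `P` of primes, they encode the
squarefree integers `d ≤ Q` all of whose prime factors lie in `P`, over which sieve weights of
level `Q` are supported. -/
noncomputable def sieveSupport (P : Finset ℕ) (Q : ℝ) : Finset (Finset ℕ) :=
  P.powerset.filter fun T => ((∏ p ∈ T, p : ℕ) : ℝ) ≤ Q

variable {P : Finset ℕ} {Q : ℝ}

lemma mem_sieveSupport {T : Finset ℕ} :
    T ∈ sieveSupport P Q ↔ T ⊆ P ∧ ((∏ p ∈ T, p : ℕ) : ℝ) ≤ Q := by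
  rw [sieveSupport, mem_filter, mem_powerset]

lemma sum_sieveSupport_le_sum_Icc (hP : ∀ p ∈ P, p.Prime) {g : ℕ → ℝ} (hg : ∀ n, 0 ≤ g n) :
    ∑ T ∈ sieveSupport P Q, g (∏ p ∈ T, p) ≤ ∑ n ∈ Icc 1 ⌊Q⌋₊, g n := by
  have hprime : ∀ T ∈ sieveSupport P Q, ∀ p ∈ T, p.Prime :=
    fun T hT p hp => hP p ((mem_sieveSupport.1 hT).1 hp)
  have hinj : Set.InjOn (fun T : Finset ℕ => ∏ p ∈ T, p) (sieveSupport P Q) := by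
    intro T hT T' hT' h
    rw [← Nat.primeFactors_prod (hprime T hT), ← Nat.primeFactors_prod (hprime T' hT')]
    exact congrArg Nat.primeFactors h
  rw [← sum_image (f := g) hinj]
  refine sum_le_sum_of_subset_of_nonneg (fun n hn => ?_) fun n _ _ => hg n
  obtain ⟨T, hT, rfl⟩ := mem_image.1 hn
  exact mem_Icc.2 ⟨prod_pos fun p hp => (hprime T hT p hp).pos,
    Nat.le_floor (mem_sieveSupport.1 hT).2⟩

lemma card_sieveSupport_le (hP : ∀ p ∈ P, p.Prime) (hQ : 0 ≤ Q) : (#(sieveSupport P Q) : ℝ) ≤ Q :=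
  calc (#(sieveSupport P Q) : ℝ) ≤ ⌊Q⌋₊ := by
        simpa using sum_sieveSupport_le_sum_Icc hP (Q := Q) (g := fun _ => 1) fun _ => zero_le_one
    _ ≤ Q := Nat.floor_le hQ

lemma sum_powerset_prod_mul_sum {ι K : Type*} [Field K] {s : Finset ι} {h : ι → K}
    (hh : ∀ i ∈ s, 1 + h i ≠ 0) (l : ι → K) :
    ∑ T ∈ s.powerset, (∏ i ∈ T, h i) * ∑ i ∈ T, l i =
      (∏ i ∈ s, (1 + h i)) * ∑ i ∈ s, h i / (1 + h i) * l i := by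
  classical
  induction s using Finset.induction_on with
  | empty => simp
  | insert a s ha ih =>
    rw [forall_mem_insert] at hh
    have hinsert : ∀ T ∈ s.powerset, (∏ i ∈ insert a T, h i) * ∑ i ∈ insert a T, l i =
        h a * l a * (∏ i ∈ T, h i) + h a * ((∏ i ∈ T, h i) * ∑ i ∈ T, l i) := by
      intro T hT
      have haT : a ∉ T := fun haT => ha (mem_powerset.1 hT haT)
      rw [prod_insert haT, sum_insert haT]
      ring
    rw [sum_powerset_insert ha, sum_congr rfl hinsert, sum_add_distrib, ← mul_sum, ← mul_sum,
      ← prod_one_add, ih hh.2, prod_insert ha, sum_insert ha]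
    have := hh.1
    field_simp
    ring

/- Markov's inequality for the random subset of `s` that contains each `i` independently with
probability `h i / (1 + h i)`. -/
lemma prod_one_add_le_two_mul_sum_powerset_filter {ι : Type*} {s : Finset ι} {h l : ι → ℝ} {K : ℝ}
    (hh : ∀ i ∈ s, 0 ≤ h i) (hl : ∀ i ∈ s, 0 ≤ l i) (hK : 0 < K)
    (hmean : ∑ i ∈ s, h i / (1 + h i) * l i ≤ K / 2) :
    ∏ i ∈ s, (1 + h i) ≤ 2 * ∑ T ∈ s.powerset with ∑ i ∈ T, l i ≤ K, ∏ i ∈ T, h i := by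
  have hprod : ∀ T ∈ s.powerset, 0 ≤ ∏ i ∈ T, h i :=
    fun T hT => prod_nonneg fun i hi => hh i (mem_powerset.1 hT hi)
  have hsum : ∀ T ∈ s.powerset, 0 ≤ ∑ i ∈ T, l i :=
    fun T hT => sum_nonneg fun i hi => hl i (mem_powerset.1 hT hi)
  have hsplit : ∏ i ∈ s, (1 + h i) = ∑ T ∈ s.powerset with ∑ i ∈ T, l i ≤ K, ∏ i ∈ T, h i +
      ∑ T ∈ s.powerset with ¬ ∑ i ∈ T, l i ≤ K, ∏ i ∈ T, h i := by
    rw [sum_filter_add_sum_filter_not, prod_one_add]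
  have htail : K * ∑ T ∈ s.powerset with ¬ ∑ i ∈ T, l i ≤ K, ∏ i ∈ T, h i ≤
      K * ((∏ i ∈ s, (1 + h i)) / 2) :=
    calc K * ∑ T ∈ s.powerset with ¬ ∑ i ∈ T, l i ≤ K, ∏ i ∈ T, h i
      _ ≤ ∑ T ∈ s.powerset with ¬ ∑ i ∈ T, l i ≤ K, (∏ i ∈ T, h i) * ∑ i ∈ T, l i := by
          rw [mul_sum]
          refine sum_le_sum fun T hT => ?_
          obtain ⟨hTs, hTK⟩ := mem_filter.1 hT
          rw [mul_comm]
          exact mul_le_mul_of_nonneg_left (not_le.1 hTK).le (hprod T hTs)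
      _ ≤ ∑ T ∈ s.powerset, (∏ i ∈ T, h i) * ∑ i ∈ T, l i :=
          sum_le_sum_of_subset_of_nonneg (filter_subset _ _)
            fun T hT _ => mul_nonneg (hprod T hT) (hsum T hT)
      _ = (∏ i ∈ s, (1 + h i)) * ∑ i ∈ s, h i / (1 + h i) * l i :=
          sum_powerset_prod_mul_sum (fun i hi => by linarith [hh i hi]) l
      _ ≤ (∏ i ∈ s, (1 + h i)) * (K / 2) :=
          mul_le_mul_of_nonneg_left hmean (prod_nonneg fun i hi => by linarith [hh i hi])
      _ = K * ((∏ i ∈ s, (1 + h i)) / 2) := by ring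
  linarith [le_of_mul_le_mul_left htail hK]

lemma prod_one_add_le_two_mul_sum_sieveSupport (hP : ∀ p ∈ P, p.Prime) {h : ℕ → ℝ}
    (hh : ∀ p ∈ P, 0 ≤ h p) (hQ : 1 < Q)
    (hmean : ∑ p ∈ P, h p / (1 + h p) * log p ≤ log Q / 2) :
    ∏ p ∈ P, (1 + h p) ≤ 2 * ∑ T ∈ sieveSupport P Q, ∏ p ∈ T, h p := by
  have hsupport :
      sieveSupport P Q = P.powerset.filter fun T : Finset ℕ => ∑ p ∈ T, log p ≤ log Q := by
    refine filter_congr fun T hT => ?_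
    have hpos : ∀ p ∈ T, (0 : ℝ) < p :=
      fun p hp => Nat.cast_pos.2 (hP p (mem_powerset.1 hT hp)).pos
    rw [Nat.cast_prod, ← log_prod fun p hp => (hpos p hp).ne',
      log_le_log_iff (prod_pos hpos) (by linarith)]
  rw [hsupport]
  exact prod_one_add_le_two_mul_sum_powerset_filter hh (fun p _ => log_natCast_nonneg p)
    (log_pos hQ) hmean

end SieveSupport

section LargeSieve

lemma card_filter_range_natCast_mem {p : ℕ} [NeZero p] (Z : Finset (ZMod p)) :
    #{n ∈ range p | ((n : ℕ) : ZMod p) ∈ Z} = #Z := by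
  refine card_bij' (fun n _ => (n : ZMod p)) (fun x _ => x.val) ?_ ?_ ?_ ?_
  · exact fun n hn => (mem_filter.1 hn).2
  · exact fun x hx => by simpa [ZMod.val_lt] using hx
  · exact fun n hn => ZMod.val_natCast_of_lt (mem_range.1 (mem_filter.1 hn).1)
  · exact fun x _ => ZMod.natCast_zmod_val x

lemma sum_range_ite_natCast_mem {p : ℕ} [NeZero p] (Z : Finset (ZMod p)) (a b : ℝ) :
    ∑ n ∈ range p, (if (n : ZMod p) ∈ Z then a else b) = #Z * a + (p - #Z) * b := by
  have hcompl : (#{n ∈ range p | ((n : ℕ) : ZMod p) ∉ Z} : ℝ) = p - #Z := by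
    have hcard := card_filter_add_card_filter_not (s := range p) fun n : ℕ => (n : ZMod p) ∈ Z
    rw [card_filter_range_natCast_mem, card_range] at hcard
    rw [eq_sub_iff_add_eq']
    exact_mod_cast hcard
  rw [sum_ite, sum_const, sum_const, nsmul_eq_mul, nsmul_eq_mul, hcompl,
    card_filter_range_natCast_mem]

/-- The ratio `ω / (p - ω)` of the number `ω` of residue classes modulo `p` that are sifted out
to the number of those that remain. -/
noncomputable def siftingRatio (p : ℕ) (Z : Finset (ZMod p)) : ℝ := #Z / (p - #Z)

/-- The `p`-periodic function of mean zero that equals `-1` on the classes in `Z` and is constant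
on the others. It is the real-valued analogue of the additive characters modulo `p` in the
large sieve. -/
noncomputable def localWeight (p : ℕ) (Z : Finset (ZMod p)) (n : ℕ) : ℝ :=
  if (n : ZMod p) ∈ Z then -1 else siftingRatio p Z

section LocalWeight

variable {p : ℕ} {Z : Finset (ZMod p)}

lemma siftingRatio_nonneg (hZ : 2 * #Z ≤ p) : 0 ≤ siftingRatio p Z := by
  have hZ' : (2 * #Z : ℝ) ≤ p := by exact_mod_cast hZ
  exact div_nonneg (Nat.cast_nonneg _) (by linarith [Nat.cast_nonneg (α := ℝ) #Z])

lemma siftingRatio_le_one (hZ : 2 * #Z ≤ p) : siftingRatio p Z ≤ 1 := by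
  have hZ' : (2 * #Z : ℝ) ≤ p := by exact_mod_cast hZ
  exact div_le_one_of_le₀ (by linarith) (by linarith [Nat.cast_nonneg (α := ℝ) #Z])

lemma cast_sub_card_ne_zero (hp : 0 < p) (hZ : 2 * #Z ≤ p) : (p : ℝ) - #Z ≠ 0 := by
  have hp' : (0 : ℝ) < p := by exact_mod_cast hp
  have hZ' : (2 * #Z : ℝ) ≤ p := by exact_mod_cast hZ
  linarith

lemma one_add_siftingRatio (hp : 0 < p) (hZ : 2 * #Z ≤ p) :
    1 + siftingRatio p Z = (1 - #Z / p : ℝ)⁻¹ := by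
  have hp' : (0 : ℝ) < p := by exact_mod_cast hp
  have hsub := cast_sub_card_ne_zero hp hZ
  rw [siftingRatio, one_sub_div hp'.ne', inv_div, one_add_div hsub, sub_add_cancel]

lemma siftingRatio_div_one_add (hp : 0 < p) (hZ : 2 * #Z ≤ p) :
    siftingRatio p Z / (1 + siftingRatio p Z) = #Z / p := by
  have hsub := cast_sub_card_ne_zero hp hZ
  rw [one_add_siftingRatio hp hZ, div_inv_eq_mul, siftingRatio]
  field_simp

lemma periodic_localWeight : Function.Periodic (localWeight p Z) p := fun n => by
  simp [localWeight]

lemma abs_localWeight_le_one (hZ : 2 * #Z ≤ p) (n : ℕ) : |localWeight p Z n| ≤ 1 := by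
  unfold localWeight
  split_ifs
  · simp
  · rw [abs_of_nonneg (siftingRatio_nonneg hZ)]
    exact siftingRatio_le_one hZ

lemma sum_range_localWeight (hp : 0 < p) (hZ : 2 * #Z ≤ p) :
    ∑ n ∈ range p, localWeight p Z n = 0 := by
  have : NeZero p := ⟨hp.ne'⟩
  have hsub := cast_sub_card_ne_zero hp hZ
  simp only [localWeight]
  rw [sum_range_ite_natCast_mem, siftingRatio, mul_div_cancel₀ _ hsub]
  ring

lemma sum_range_localWeight_sq (hp : 0 < p) (hZ : 2 * #Z ≤ p) :
    ∑ n ∈ range p, localWeight p Z n ^ 2 = p * siftingRatio p Z := by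
  have : NeZero p := ⟨hp.ne'⟩
  have hsub := cast_sub_card_ne_zero hp hZ
  simp only [localWeight, ite_pow]
  rw [sum_range_ite_natCast_mem, siftingRatio]
  field_simp
  ring

end LocalWeight

/-- The product of the local weights at the primes in `T`. Products over distinct `T` are nearly
orthogonal on long intervals. -/
noncomputable def prodWeight (Z : ∀ p : ℕ, Finset (ZMod p)) (T : Finset ℕ) (n : ℕ) : ℝ :=
  ∏ p ∈ T, localWeight p (Z p) n

variable {Z : ∀ p : ℕ, Finset (ZMod p)} {T T' : Finset ℕ}

lemma abs_prodWeight_le_one (hZ : ∀ p ∈ T, 2 * #(Z p) ≤ p) (n : ℕ) : |prodWeight Z T n| ≤ 1 := by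
  rw [prodWeight, abs_prod]
  exact prod_le_one (fun _ _ => abs_nonneg _) fun p hp => abs_localWeight_le_one (hZ p hp) n

lemma pairwise_coprime_of_prime (hT : ∀ p ∈ T, p.Prime) :
    (T : Set ℕ).Pairwise (Function.onFun Nat.Coprime id) :=
  fun p hp q hq hpq => (Nat.coprime_primes (hT p hp) (hT q hq)).2 hpq

lemma sum_range_prodWeight_sq_le (hT : ∀ p ∈ T, p.Prime) (hZ : ∀ p ∈ T, 2 * #(Z p) ≤ p) (N : ℕ) :
    ∑ n ∈ range N, prodWeight Z T n ^ 2 ≤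
      (N + (∏ p ∈ T, p : ℕ)) * ∏ p ∈ T, siftingRatio p (Z p) := by
  have hM : 0 < ∏ p ∈ T, p := prod_pos fun p hp => (hT p hp).pos
  have hperiodic : ∀ p ∈ T, Function.Periodic (fun n => localWeight p (Z p) n ^ 2) (id p) :=
    fun p _ => periodic_localWeight.comp (· ^ 2)
  have hperiod : ∑ n ∈ range (∏ p ∈ T, p), ∏ p ∈ T, localWeight p (Z p) n ^ 2 =
      (∏ p ∈ T, p : ℕ) * ∏ p ∈ T, siftingRatio p (Z p) := by
    rw [Nat.cast_prod, ← prod_mul_distrib]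
    exact (sum_range_prod_of_pairwise_coprime (pairwise_coprime_of_prime hT) hperiodic).trans
      (prod_congr rfl fun p hp => sum_range_localWeight_sq (hT p hp).pos (hZ p hp))
  simp only [prodWeight, ← prod_pow]
  calc ∑ n ∈ range N, ∏ p ∈ T, localWeight p (Z p) n ^ 2
      ≤ (N / (∏ p ∈ T, p : ℕ) + 1) * ∑ n ∈ range (∏ p ∈ T, p), ∏ p ∈ T, localWeight p (Z p) n ^ 2 :=
        sum_range_le_of_periodic_of_nonneg hM (periodic_prod_of_forall_periodic hperiodic)
          (fun _ => prod_nonneg fun _ _ => sq_nonneg _) N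
    _ = (N + (∏ p ∈ T, p : ℕ)) * ∏ p ∈ T, siftingRatio p (Z p) := by
        have hM' : ((∏ p ∈ T, p : ℕ) : ℝ) ≠ 0 := by exact_mod_cast hM.ne'
        rw [hperiod, ← mul_assoc, add_mul, div_mul_cancel₀ _ hM', one_mul]

lemma sum_range_prodWeight_mul_le (hT : ∀ p ∈ T, p.Prime) (hT' : ∀ p ∈ T', p.Prime)
    (hZ : ∀ p ∈ T, 2 * #(Z p) ≤ p) (hZ' : ∀ p ∈ T', 2 * #(Z p) ≤ p) (hne : T ≠ T') (N : ℕ) :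
    ∑ n ∈ range N, prodWeight Z T n * prodWeight Z T' n ≤
      (∏ p ∈ T, p : ℕ) * (∏ p ∈ T', p : ℕ) := by
  have hunion : ∀ p ∈ T ∪ T', p.Prime := fun p hp => (mem_union.1 hp).elim (hT p) (hT' p)
  let g (p n : ℕ) : ℝ := (if p ∈ T then localWeight p (Z p) n else 1) *
    (if p ∈ T' then localWeight p (Z p) n else 1)
  have hg (n : ℕ) : prodWeight Z T n * prodWeight Z T' n = ∏ p ∈ T ∪ T', g p n := by
    rw [prod_mul_distrib, prod_ite_mem, prod_ite_mem, union_inter_cancel_left,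
      union_inter_cancel_right, prodWeight, prodWeight]
  have hperiodic : ∀ p ∈ T ∪ T', Function.Periodic (g p) (id p) := fun p _ n => by
    simp only [g, id, periodic_localWeight n]
  have hzero : ∑ n ∈ range (∏ p ∈ T ∪ T', p), ∏ p ∈ T ∪ T', g p n = 0 := by
    obtain ⟨p, hp⟩ : ∃ p, ¬(p ∈ T ↔ p ∈ T') := not_forall.1 fun h => hne (Finset.ext h)
    have hpU : p ∈ T ∪ T' := mem_union.2 (by tauto)
    have hgp : ∀ n, g p n = localWeight p (Z p) n := fun n => by
      by_cases h : p ∈ T <;> by_cases h' : p ∈ T' <;> simp_all [g]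
    have hZp : 2 * #(Z p) ≤ p := (mem_union.1 hpU).elim (hZ p) (hZ' p)
    refine (sum_range_prod_of_pairwise_coprime (pairwise_coprime_of_prime hunion) hperiodic).trans
      (prod_eq_zero hpU ?_)
    simp only [hgp]
    exact sum_range_localWeight (hunion p hpU).pos hZp
  have hle : ∏ p ∈ T ∪ T', p ≤ (∏ p ∈ T, p) * ∏ p ∈ T', p := by
    rw [← prod_union_inter]
    exact Nat.le_mul_of_pos_right _ (prod_pos fun p hp => (hT p (mem_inter.1 hp).1).pos)
  have hle_one (n : ℕ) : ∏ p ∈ T ∪ T', g p n ≤ 1 := by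
    rw [← hg]
    refine (le_abs_self _).trans ?_
    rw [abs_mul]
    exact mul_le_one₀ (abs_prodWeight_le_one hZ n) (abs_nonneg _) (abs_prodWeight_le_one hZ' n)
  simp only [hg]
  refine (sum_range_le_of_periodic_of_sum_eq_zero (prod_pos fun p hp => (hunion p hp).pos)
    (periodic_prod_of_forall_periodic hperiodic) hzero hle_one N).trans ?_
  exact_mod_cast hle

variable {P : Finset ℕ} {Q : ℝ}

lemma sum_range_sum_prodWeight_sq_le (hP : ∀ p ∈ P, p.Prime) (hZ : ∀ p ∈ P, 2 * #(Z p) ≤ p)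
    (hQ : 0 ≤ Q) (N : ℕ) :
    ∑ n ∈ range N, (∑ T ∈ sieveSupport P Q, prodWeight Z T n) ^ 2 ≤
      (N + Q) * ∑ T ∈ sieveSupport P Q, ∏ p ∈ T, siftingRatio p (Z p) + Q ^ 4 := by
  set F := sieveSupport P Q
  have hsub : ∀ T ∈ F, T ⊆ P := fun T hT => (mem_sieveSupport.1 hT).1
  have hFQ : ∀ T ∈ F, ((∏ p ∈ T, p : ℕ) : ℝ) ≤ Q := fun T hT => (mem_sieveSupport.1 hT).2
  have hratio : ∀ T ∈ F, 0 ≤ ∏ p ∈ T, siftingRatio p (Z p) :=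
    fun T hT => prod_nonneg fun p hp => siftingRatio_nonneg (hZ p (hsub T hT hp))
  have hpair : ∀ T ∈ F, ∀ T' ∈ F, ∑ n ∈ range N, prodWeight Z T n * prodWeight Z T' n ≤
      (if T = T' then (N + Q) * ∏ p ∈ T, siftingRatio p (Z p) else 0) + Q ^ 2 := by
    intro T hT T' hT'
    have hTP : ∀ p ∈ T, p.Prime := fun p hp => hP p (hsub T hT hp)
    have hTZ : ∀ p ∈ T, 2 * #(Z p) ≤ p := fun p hp => hZ p (hsub T hT hp)
    split_ifs with h
    · subst h
      simp only [← sq]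
      have hTQ := mul_le_mul_of_nonneg_right (add_le_add_right (hFQ T hT) (N : ℝ)) (hratio T hT)
      linarith [sum_range_prodWeight_sq_le hTP hTZ N, sq_nonneg Q]
    · rw [zero_add, sq]
      exact (sum_range_prodWeight_mul_le hTP (fun p hp => hP p (hsub T' hT' hp)) hTZ
        (fun p hp => hZ p (hsub T' hT' hp)) h N).trans
          (mul_le_mul (hFQ T hT) (hFQ T' hT') (Nat.cast_nonneg _) hQ)
  calc ∑ n ∈ range N, (∑ T ∈ F, prodWeight Z T n) ^ 2
      = ∑ T ∈ F, ∑ T' ∈ F, ∑ n ∈ range N, prodWeight Z T n * prodWeight Z T' n := by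
        simp only [sq, sum_mul_sum]
        rw [sum_comm]
        exact sum_congr rfl fun _ _ => sum_comm
    _ ≤ ∑ T ∈ F, ∑ T' ∈ F,
          ((if T = T' then (N + Q) * ∏ p ∈ T, siftingRatio p (Z p) else 0) + Q ^ 2) :=
        sum_le_sum fun T hT => sum_le_sum fun T' hT' => hpair T hT T' hT'
    _ = (N + Q) * ∑ T ∈ F, ∏ p ∈ T, siftingRatio p (Z p) + #F * #F * Q ^ 2 := by
        simp only [sum_add_distrib, sum_ite_eq, sum_const, nsmul_eq_mul, mul_sum, mul_assoc]
        exact congrArg (· + _) (sum_congr rfl fun T hT => if_pos hT)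
    _ ≤ (N + Q) * ∑ T ∈ F, ∏ p ∈ T, siftingRatio p (Z p) + Q * Q * Q ^ 2 := by
        gcongr <;> exact card_sieveSupport_le hP hQ
    _ = (N + Q) * ∑ T ∈ F, ∏ p ∈ T, siftingRatio p (Z p) + Q ^ 4 := by ring

lemma card_mul_sum_siftingRatio_le (hP : ∀ p ∈ P, p.Prime) (hZ : ∀ p ∈ P, 2 * #(Z p) ≤ p)
    (hQ : 1 ≤ Q) {N : ℕ} {X : Finset ℕ} (hXN : X ⊆ range N)
    (hXZ : ∀ n ∈ X, ∀ p ∈ P, (n : ZMod p) ∉ Z p) :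
    #X * ∑ T ∈ sieveSupport P Q, ∏ p ∈ T, siftingRatio p (Z p) ≤ N + Q + Q ^ 4 := by
  set S := ∑ T ∈ sieveSupport P Q, ∏ p ∈ T, siftingRatio p (Z p)
  have hS_one : 1 ≤ S := by
    have hempty : ∅ ∈ sieveSupport P Q := mem_sieveSupport.2 ⟨empty_subset P, by simpa using hQ⟩
    refine le_of_eq_of_le prod_empty.symm
      (single_le_sum (f := fun T => ∏ p ∈ T, siftingRatio p (Z p)) (fun T hT => ?_) hempty)
    exact prod_nonneg fun p hp => siftingRatio_nonneg (hZ p ((mem_sieveSupport.1 hT).1 hp))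
  have hconst : ∀ n ∈ X, ∑ T ∈ sieveSupport P Q, prodWeight Z T n = S := fun n hn =>
    sum_congr rfl fun T hT => prod_congr rfl fun p hp =>
      if_neg (hXZ n hn p ((mem_sieveSupport.1 hT).1 hp))
  have hsquare : #X * S ^ 2 ≤ (N + Q) * S + Q ^ 4 :=
    calc #X * S ^ 2 = ∑ n ∈ X, (∑ T ∈ sieveSupport P Q, prodWeight Z T n) ^ 2 := by
          rw [sum_congr rfl fun n hn => by rw [hconst n hn], sum_const, nsmul_eq_mul]
      _ ≤ ∑ n ∈ range N, (∑ T ∈ sieveSupport P Q, prodWeight Z T n) ^ 2 :=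
          sum_le_sum_of_subset_of_nonneg hXN fun _ _ _ => sq_nonneg _
      _ ≤ (N + Q) * S + Q ^ 4 := sum_range_sum_prodWeight_sq_le hP hZ (zero_le_one.trans hQ) N
  refine le_of_mul_le_mul_right ?_ (zero_lt_one.trans_le hS_one)
  calc #X * S * S = #X * S ^ 2 := by ring
    _ ≤ (N + Q) * S + Q ^ 4 := hsquare
    _ ≤ (N + Q) * S + Q ^ 4 * S := by gcongr; exact le_mul_of_one_le_right (by positivity) hS_one
    _ = (N + Q + Q ^ 4) * S := by ring

theorem card_mul_prod_inv_le (hP : ∀ p ∈ P, p.Prime) (hZ : ∀ p ∈ P, 2 * #(Z p) ≤ p)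
    (hQ : 1 < Q) (hmean : ∑ p ∈ P, #(Z p) / p * log p ≤ log Q / 2) {N : ℕ} {X : Finset ℕ}
    (hXN : X ⊆ range N) (hXZ : ∀ n ∈ X, ∀ p ∈ P, (n : ZMod p) ∉ Z p) :
    #X * ∏ p ∈ P, (1 - #(Z p) / p : ℝ)⁻¹ ≤ 2 * (N + Q + Q ^ 4) := by
  have hmean' : ∑ p ∈ P, siftingRatio p (Z p) / (1 + siftingRatio p (Z p)) * log p ≤ log Q / 2 := by
    rwa [sum_congr rfl fun p hp => by rw [siftingRatio_div_one_add (hP p hp).pos (hZ p hp)]]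
  have hprod : ∏ p ∈ P, (1 - #(Z p) / p : ℝ)⁻¹ = ∏ p ∈ P, (1 + siftingRatio p (Z p)) :=
    prod_congr rfl fun p hp => (one_add_siftingRatio (hP p hp).pos (hZ p hp)).symm
  calc #X * ∏ p ∈ P, (1 - #(Z p) / p : ℝ)⁻¹
      ≤ #X * (2 * ∑ T ∈ sieveSupport P Q, ∏ p ∈ T, siftingRatio p (Z p)) := by
        rw [hprod]
        exact mul_le_mul_of_nonneg_left (prod_one_add_le_two_mul_sum_sieveSupport hP
          (fun p hp => siftingRatio_nonneg (hZ p hp)) hQ hmean') (Nat.cast_nonneg _)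
    _ = 2 * (#X * ∑ T ∈ sieveSupport P Q, ∏ p ∈ T, siftingRatio p (Z p)) := by ring
    _ ≤ 2 * (N + Q + Q ^ 4) :=
        mul_le_mul_of_nonneg_left (card_mul_sum_siftingRatio_le hP hZ hQ.le hXN hXZ) zero_le_two

end LargeSieve

section Mertens

lemma prod_primesLE_pow_div_dvd_factorial (n : ℕ) :
    ∏ p ∈ Nat.primesLE n, p ^ (n / p) ∣ n.factorial := by
  refine prod_dvd_of_isRelPrime (fun p hp q hq hpq => ?_) fun p hp => ?_
  · exact Nat.coprime_iff_isRelPrime.1 (Nat.Coprime.pow _ _ ((Nat.coprime_primes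
      (Nat.prime_of_mem_primesLE hp) (Nat.prime_of_mem_primesLE hq)).2 hpq))
  · calc p ^ (n / p) ∣ p.factorial ^ (n / p) :=
          pow_dvd_pow_of_dvd (Nat.dvd_factorial (Nat.prime_of_mem_primesLE hp).pos le_rfl) _
      _ ∣ (n / p * p).factorial := by
          simpa using Nat.prod_factorial_dvd_factorial_sum (range (n / p)) fun _ => p
      _ ∣ n.factorial := Nat.factorial_dvd_factorial (Nat.div_mul_le_self n p)

lemma sum_primesLE_div_mul_log_le (n : ℕ) :
    ∑ p ∈ Nat.primesLE n, (n / p : ℕ) * log p ≤ n * log n := by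
  have hpos : ∀ p ∈ Nat.primesLE n, (0 : ℝ) < p :=
    fun p hp => Nat.cast_pos.2 (Nat.prime_of_mem_primesLE hp).pos
  have hle : ∏ p ∈ Nat.primesLE n, p ^ (n / p) ≤ n ^ n :=
    (Nat.le_of_dvd n.factorial_pos (prod_primesLE_pow_div_dvd_factorial n)).trans
      n.factorial_le_pow
  calc ∑ p ∈ Nat.primesLE n, (n / p : ℕ) * log p
      = log (∏ p ∈ Nat.primesLE n, (p : ℝ) ^ (n / p)) := by
        rw [log_prod fun p hp => (pow_pos (hpos p hp) _).ne']
        simp only [log_pow]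
    _ ≤ log ((n : ℝ) ^ n) :=
        log_le_log (prod_pos fun p hp => pow_pos (hpos p hp) _) (by exact_mod_cast hle)
    _ = n * log n := log_pow n n

lemma sum_primesLE_log_div_le (n : ℕ) : ∑ p ∈ Nat.primesLE n, log p / p ≤ 2 * log n := by
  rcases n.eq_zero_or_pos with rfl | hn
  · simp
  have hn' : (0 : ℝ) < n := by exact_mod_cast hn
  have hterm : ∀ p ∈ Nat.primesLE n, n * (log p / p) ≤ 2 * ((n / p : ℕ) * log p) := by
    intro p hp
    have hp0 : 0 < p := (Nat.prime_of_mem_primesLE hp).pos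
    have hquot : n ≤ 2 * (n / p) * p := by
      have hlt := Nat.lt_mul_div_succ n hp0
      have hone : 1 ≤ n / p := Nat.div_pos (Nat.le_of_mem_primesLE hp) hp0
      nlinarith
    have hquot' : (n : ℝ) / p ≤ 2 * (n / p : ℕ) := by
      rw [div_le_iff₀ (by exact_mod_cast hp0)]
      exact_mod_cast hquot
    calc n * (log p / p) = n / p * log p := by ring
      _ ≤ 2 * (n / p : ℕ) * log p := mul_le_mul_of_nonneg_right hquot' (log_natCast_nonneg p)
      _ = 2 * ((n / p : ℕ) * log p) := mul_assoc _ _ _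
  refine le_of_mul_le_mul_left ?_ hn'
  calc n * ∑ p ∈ Nat.primesLE n, log p / p
      ≤ 2 * ∑ p ∈ Nat.primesLE n, (n / p : ℕ) * log p := by
        rw [mul_sum, mul_sum]
        exact sum_le_sum hterm
    _ ≤ 2 * (n * log n) := by gcongr; exact sum_primesLE_div_mul_log_le n
    _ = n * (2 * log n) := by ring

lemma prod_primesLE_one_add_inv_le {n : ℕ} (hn : 2 ≤ n) :
    ∏ p ∈ Nat.primesLE n, (1 + (p : ℝ)⁻¹) ≤ 2 * (1 + 4 * log n) := by
  have hprime : ∀ p ∈ Nat.primesLE n, p.Prime := fun _ => Nat.prime_of_mem_primesLE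
  have hmean : ∑ p ∈ Nat.primesLE n, (p : ℝ)⁻¹ / (1 + (p : ℝ)⁻¹) * log p ≤
      log ((n ^ 4 : ℕ) : ℝ) / 2 :=
    calc ∑ p ∈ Nat.primesLE n, (p : ℝ)⁻¹ / (1 + (p : ℝ)⁻¹) * log p
        ≤ ∑ p ∈ Nat.primesLE n, log p / p := by
          refine sum_le_sum fun p _ => ?_
          have hp : (0 : ℝ) ≤ (p : ℝ)⁻¹ := by positivity
          rw [div_eq_inv_mul (log p)]
          exact mul_le_mul_of_nonneg_right (div_le_self hp (by linarith)) (log_natCast_nonneg p)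
      _ ≤ 2 * log n := sum_primesLE_log_div_le n
      _ = log ((n ^ 4 : ℕ) : ℝ) / 2 := by rw [Nat.cast_pow, log_pow]; ring
  have hQ : (1 : ℝ) < (n ^ 4 : ℕ) := by exact_mod_cast Nat.one_lt_pow four_ne_zero hn
  calc ∏ p ∈ Nat.primesLE n, (1 + (p : ℝ)⁻¹)
      ≤ 2 * ∑ T ∈ sieveSupport (Nat.primesLE n) (n ^ 4 : ℕ), ∏ p ∈ T, (p : ℝ)⁻¹ :=
        prod_one_add_le_two_mul_sum_sieveSupport hprime (fun p _ => by positivity) hQ hmean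
    _ = 2 * ∑ T ∈ sieveSupport (Nat.primesLE n) (n ^ 4 : ℕ), ((∏ p ∈ T, p : ℕ) : ℝ)⁻¹ := by
        simp only [Nat.cast_prod, prod_inv_distrib]
    _ ≤ 2 * ∑ k ∈ Icc 1 (n ^ 4), (k : ℝ)⁻¹ := by
        gcongr
        simpa only [Nat.floor_natCast] using sum_sieveSupport_le_sum_Icc hprime
          (Q := (n ^ 4 : ℕ)) (g := fun k => (k : ℝ)⁻¹) fun k => by positivity
    _ ≤ 2 * (1 + log (n ^ 4 : ℕ)) := by
        have hharmonic := harmonic_le_one_add_log (n ^ 4)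
        rw [harmonic_eq_sum_Icc] at hharmonic
        push_cast at hharmonic ⊢
        linarith
    _ = 2 * (1 + 4 * log n) := by rw [Nat.cast_pow, log_pow]; norm_num

lemma sum_Icc_inv_le_prod_primesLE_inv (n : ℕ) :
    ∑ k ∈ Icc 1 n, (k : ℝ)⁻¹ ≤ ∏ p ∈ Nat.primesLE n, (1 - (p : ℝ)⁻¹)⁻¹ := by
  let f : ℕ →* ℝ := ⟨⟨fun k => (k : ℝ)⁻¹, by simp⟩, fun a b => by simp [mul_comm]⟩
  have hf : ∀ {p : ℕ}, p.Prime → ‖f p‖ < 1 := fun {p} hp => by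
    have hp1 : (1 : ℝ) < p := by exact_mod_cast hp.one_lt
    rw [show f p = (p : ℝ)⁻¹ from rfl, norm_inv, RCLike.norm_natCast]
    exact inv_lt_one_of_one_lt₀ hp1
  have hsum :=
    (EulerProduct.summable_and_hasSum_smoothNumbers_prod_primesBelow_geometric hf (n + 1)).2
  have hsmooth : ∀ k ∈ Icc 1 n, k ∈ (n + 1).smoothNumbers := fun k hk =>
    Nat.mem_smoothNumbers_of_lt (mem_Icc.1 hk).1 (Nat.lt_succ_of_le (mem_Icc.1 hk).2)
  rw [← sum_subtype_of_mem (fun k : ℕ => (k : ℝ)⁻¹) hsmooth]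
  exact sum_le_hasSum _ (fun k _ => inv_nonneg.2 (Nat.cast_nonneg _)) hsum

lemma prod_Ico_one_sub_inv_sq (n : ℕ) :
    ∏ k ∈ Ico 2 (n + 2), (1 - ((k : ℝ) ^ 2)⁻¹) = (n + 2) / (2 * (n + 1)) := by
  induction n with
  | zero => norm_num
  | succ n ih =>
    rw [show n + 1 + 2 = (n + 2) + 1 by ring, prod_Ico_succ_top (by lia), ih]
    push_cast
    have hn : (n : ℝ) + 1 ≠ 0 := by positivity
    have hn' : (n : ℝ) + 2 ≠ 0 := by positivity
    field_simp
    ring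

lemma half_le_prod_one_sub_inv_sq {s : Finset ℕ} (hs : ∀ k ∈ s, 2 ≤ k) :
    1 / 2 ≤ ∏ k ∈ s, (1 - ((k : ℝ) ^ 2)⁻¹) := by
  obtain ⟨n, hn⟩ := s.exists_nat_subset_range
  have hsub : s ⊆ Ico 2 (n + 2) := fun k hk =>
    mem_Ico.2 ⟨hs k hk, (mem_range.1 (hn hk)).trans (by lia)⟩
  have hfactor : ∀ k ∈ Ico 2 (n + 2), ((k : ℝ) ^ 2)⁻¹ ≤ 1 := fun k hk =>
    inv_le_one_of_one_le₀ (one_le_pow₀ (by exact_mod_cast one_le_two.trans (mem_Ico.1 hk).1))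
  calc (1 : ℝ) / 2 ≤ (n + 2) / (2 * (n + 1)) := by
        rw [div_le_div_iff₀ two_pos (by positivity)]
        linarith
    _ = ∏ k ∈ Ico 2 (n + 2), (1 - ((k : ℝ) ^ 2)⁻¹) := (prod_Ico_one_sub_inv_sq n).symm
    _ ≤ ∏ k ∈ s, (1 - ((k : ℝ) ^ 2)⁻¹) :=
        prod_le_prod_of_subset_of_le_one hsub (fun k hk => sub_nonneg.2 (hfactor k hk))
          fun k _ _ => sub_le_self _ (by positivity)

lemma log_add_one_le_two_mul_prod_primesLE (n : ℕ) :
    log (n + 1) ≤ 2 * ∏ p ∈ Nat.primesLE n, (1 + (p : ℝ)⁻¹) := by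
  have hinv_lt : ∀ p ∈ Nat.primesLE n, (p : ℝ)⁻¹ < 1 := fun p hp =>
    inv_lt_one_of_one_lt₀ (by exact_mod_cast Nat.one_lt_of_mem_primesLE hp)
  have hpos : 0 < ∏ p ∈ Nat.primesLE n, (1 - (p : ℝ)⁻¹) :=
    prod_pos fun p hp => sub_pos.2 (hinv_lt p hp)
  have hprod : 1 / 2 ≤
      (∏ p ∈ Nat.primesLE n, (1 + (p : ℝ)⁻¹)) * ∏ p ∈ Nat.primesLE n, (1 - (p : ℝ)⁻¹) := by
    rw [← prod_mul_distrib]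
    refine (half_le_prod_one_sub_inv_sq fun p (hp : p ∈ Nat.primesLE n) =>
      Nat.two_le_of_mem_primesLE hp).trans_eq ?_
    exact prod_congr rfl fun p _ => by rw [← inv_pow]; ring
  calc log (n + 1) ≤ ∑ k ∈ Icc 1 n, (k : ℝ)⁻¹ := by
        have hharmonic := log_add_one_le_harmonic n
        rw [harmonic_eq_sum_Icc] at hharmonic
        push_cast at hharmonic
        exact hharmonic
    _ ≤ (∏ p ∈ Nat.primesLE n, (1 - (p : ℝ)⁻¹))⁻¹ :=
        (sum_Icc_inv_le_prod_primesLE_inv n).trans_eq (prod_inv_distrib _)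
    _ ≤ 2 * ∏ p ∈ Nat.primesLE n, (1 + (p : ℝ)⁻¹) := by
        rw [inv_le_iff_one_le_mul₀ hpos]
        linarith

lemma sum_primeFactors_log_le {D : ℕ} (hD : D ≠ 0) : ∑ p ∈ D.primeFactors, log p ≤ log D := by
  have hpos : ∀ p ∈ D.primeFactors, (0 : ℝ) < p :=
    fun p hp => Nat.cast_pos.2 (Nat.pos_of_mem_primeFactors hp)
  rw [← log_prod fun p hp => (hpos p hp).ne']
  refine log_le_log (prod_pos hpos) ?_
  rw [← Nat.cast_prod]
  exact Nat.cast_le.2 (Nat.le_of_dvd (Nat.pos_of_ne_zero hD) D.prod_primeFactors_dvd)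

lemma prod_primeFactors_gt_one_add_inv_le {D y : ℕ} (hD : D ≠ 0) (hy : 0 < y) :
    ∏ p ∈ D.primeFactors with y < p, (1 + (p : ℝ)⁻¹) ≤ exp (log D / (y * log 2)) := by
  have hy' : (0 : ℝ) < y := by exact_mod_cast hy
  refine (prod_one_add_le_exp_sum _ fun p => by positivity).trans (exp_le_exp.2 ?_)
  calc ∑ p ∈ D.primeFactors with y < p, (p : ℝ)⁻¹
      ≤ ∑ p ∈ D.primeFactors with y < p, log p / (y * log 2) := by
        refine sum_le_sum fun p hp => ?_
        obtain ⟨hpD, hyp⟩ := mem_filter.1 hp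
        have hyp' : (y : ℝ) ≤ p := by exact_mod_cast hyp.le
        have hp2 : (2 : ℝ) ≤ p := by exact_mod_cast (Nat.prime_of_mem_primeFactors hpD).two_le
        calc (p : ℝ)⁻¹ ≤ (y : ℝ)⁻¹ := inv_anti₀ hy' hyp'
          _ = log 2 / (y * log 2) := by field_simp
          _ ≤ log p / (y * log 2) := by gcongr
    _ ≤ ∑ p ∈ D.primeFactors, log p / (y * log 2) :=
        sum_le_sum_of_subset_of_nonneg (filter_subset _ _)
          fun p _ _ => div_nonneg (log_natCast_nonneg p) (by positivity)
    _ ≤ log D / (y * log 2) := by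
        rw [← sum_div]
        gcongr
        exact sum_primeFactors_log_le hD

lemma log_add_one_le_mul_prod_primesLE_not_dvd {D y : ℕ} (hD : D ≠ 0) (hy : 2 ≤ y) (z : ℕ) :
    log (z + 1) ≤ 4 * (1 + 4 * log y) * exp (log D / (y * log 2)) *
      ∏ p ∈ Nat.primesLE z with y < p ∧ ¬p ∣ D, (1 + (p : ℝ)⁻¹) := by
  set V := ∏ p ∈ Nat.primesLE z with y < p ∧ ¬p ∣ D, (1 + (p : ℝ)⁻¹)
  have hfactor (n : ℕ) : (1 : ℝ) ≤ 1 + (n : ℝ)⁻¹ := le_add_of_nonneg_right (by positivity)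
  have hprod (s : Finset ℕ) : 0 ≤ ∏ n ∈ s, (1 + (n : ℝ)⁻¹) :=
    prod_nonneg fun n _ => zero_le_one.trans (hfactor n)
  have hcover : {p ∈ Nat.primesLE z | ¬(y < p ∧ ¬p ∣ D)} ⊆
      Nat.primesLE y ∪ {p ∈ D.primeFactors | y < p} := by
    intro p hp
    obtain ⟨hpz, hpy⟩ := mem_filter.1 hp
    have hprime := Nat.prime_of_mem_primesLE hpz
    rw [mem_union, Nat.mem_primesLE, mem_filter, Nat.mem_primeFactors]
    rcases le_or_gt p y with hle | hlt
    · exact Or.inl ⟨hle, hprime⟩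
    · exact Or.inr ⟨⟨hprime, by tauto, hD⟩, hlt⟩
  have hdisjoint : Disjoint (Nat.primesLE y) {p ∈ D.primeFactors | y < p} :=
    disjoint_left.2 fun p hp hp' => (mem_filter.1 hp').2.not_ge (Nat.le_of_mem_primesLE hp)
  calc log (z + 1) ≤ 2 * ∏ p ∈ Nat.primesLE z, (1 + (p : ℝ)⁻¹) :=
        log_add_one_le_two_mul_prod_primesLE z
    _ = 2 * (V * ∏ p ∈ Nat.primesLE z with ¬(y < p ∧ ¬p ∣ D), (1 + (p : ℝ)⁻¹)) := by
        rw [prod_filter_mul_prod_filter_not]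
    _ ≤ 2 * (V * ∏ p ∈ Nat.primesLE y ∪ {p ∈ D.primeFactors | y < p}, (1 + (p : ℝ)⁻¹)) := by
        refine mul_le_mul_of_nonneg_left (mul_le_mul_of_nonneg_left ?_ (hprod _)) zero_le_two
        exact prod_le_prod_of_subset_of_one_le hcover
          (fun n _ => zero_le_one.trans (hfactor n)) fun n _ _ => hfactor n
    _ ≤ 2 * (V * (2 * (1 + 4 * log y) * exp (log D / (y * log 2)))) := by
        rw [prod_union hdisjoint]
        refine mul_le_mul_of_nonneg_left (mul_le_mul_of_nonneg_left ?_ (hprod _)) zero_le_two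
        have hsmall := prod_primesLE_one_add_inv_le hy
        exact mul_le_mul hsmall (prod_primeFactors_gt_one_add_inv_le hD (by lia)) (hprod _)
          ((hprod _).trans hsmall)
    _ = 4 * (1 + 4 * log y) * exp (log D / (y * log 2)) * V := by ring

end Mertens

section LinearForms

variable {ι : Type*} [Fintype ι]

/-- The residue classes modulo `p` of the roots of `∏ i, (e i * X + d i)`. Classes with
`e i = 0` in `ZMod p` contribute the junk value `0`. -/
def rootClasses (e d : ι → ℤ) (p : ℕ) : Finset (ZMod p) :=
  univ.image fun i => -(d i : ZMod p) * (e i : ZMod p)⁻¹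

variable [DecidableEq ι]

/-- The discriminant `Δ(G)` of the polynomial `G = ∏ i, (e i * X + d i)`. -/
def linearFormsDiscr (e d : ι → ℤ) : ℤ :=
  (∏ i, e i) * ∏ i, ∏ j ∈ univ.filter (fun j => j ≠ i), (e i * d j - e j * d i)

variable {e d : ι → ℤ}

lemma abs_linearFormsDiscr_le {B : ℝ} (hB : 1 ≤ B) (h : ∀ i, |(e i : ℝ)| + |(d i : ℝ)| ≤ B) :
    |(linearFormsDiscr e d : ℝ)| ≤ B ^ (2 * Fintype.card ι ^ 2) := by
  have hdiscr : linearFormsDiscr e d =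
      ∏ i, ∏ j, if j ≠ i then e i * d j - e j * d i else e i := by
    rw [linearFormsDiscr, ← prod_mul_distrib]
    refine prod_congr rfl fun i _ => ?_
    rw [prod_ite, mul_comm]
    simp [filter_eq']
  have hfactor (i j : ι) : |((if j ≠ i then e i * d j - e j * d i else e i : ℤ) : ℝ)| ≤ B ^ 2 := by
    have hei := abs_nonneg (e i : ℝ)
    have hej := abs_nonneg (e j : ℝ)
    have hdi := abs_nonneg (d i : ℝ)
    have hdj := abs_nonneg (d j : ℝ)
    split_ifs
    · push_cast
      calc |(e i : ℝ) * d j - e j * d i|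
          ≤ |(e i : ℝ)| * |(d j : ℝ)| + |(e j : ℝ)| * |(d i : ℝ)| := by
            simpa only [abs_mul] using abs_sub ((e i : ℝ) * d j) (e j * d i)
        _ ≤ (|(e i : ℝ)| + |(d i : ℝ)|) * (|(e j : ℝ)| + |(d j : ℝ)|) := by
            nlinarith [mul_nonneg hei hej, mul_nonneg hdi hdj]
        _ ≤ B ^ 2 := by
            rw [sq]
            exact mul_le_mul (h i) (h j) (by positivity) (by linarith)
    · exact (by linarith [h i] : |(e i : ℝ)| ≤ B).trans (le_self_pow₀ hB two_ne_zero)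
  calc |(linearFormsDiscr e d : ℝ)|
      = ∏ i, ∏ j, |((if j ≠ i then e i * d j - e j * d i else e i : ℤ) : ℝ)| := by
        simp only [hdiscr, Int.cast_prod, abs_prod]
    _ ≤ ∏ _i : ι, ∏ _j : ι, B ^ 2 :=
        prod_le_prod (fun _ _ => prod_nonneg fun _ _ => abs_nonneg _) fun i _ =>
          prod_le_prod (fun _ _ => abs_nonneg _) fun j _ => hfactor i j
    _ = B ^ (2 * Fintype.card ι ^ 2) := by
        simp only [prod_const, card_univ, ← pow_mul]
        ring_nf

lemma log_natAbs_linearFormsDiscr_le {c₁ x : ℝ} {A : ℕ} (hΔ : linearFormsDiscr e d ≠ 0)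
    (hx : 1 ≤ x) (hlogx : 1 ≤ log x) (h : ∀ i, |(e i : ℝ)| + |(d i : ℝ)| ≤ c₁ * x ^ A) :
    log (linearFormsDiscr e d).natAbs ≤
      2 * Fintype.card ι ^ 2 * (log (max 1 c₁) + A) * log x := by
  have hc₁ : 1 ≤ max 1 c₁ := le_max_left 1 c₁
  have hxA : 1 ≤ x ^ A := one_le_pow₀ hx
  have hdiscr : ((linearFormsDiscr e d).natAbs : ℝ) ≤
      (max 1 c₁ * x ^ A) ^ (2 * Fintype.card ι ^ 2) := by
    rw [Nat.cast_natAbs, Int.cast_abs]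
    exact abs_linearFormsDiscr_le (one_le_mul_of_one_le_of_one_le hc₁ hxA) fun i =>
      (h i).trans (mul_le_mul_of_nonneg_right (le_max_right 1 c₁) (zero_le_one.trans hxA))
  calc log (linearFormsDiscr e d).natAbs
      ≤ log ((max 1 c₁ * x ^ A) ^ (2 * Fintype.card ι ^ 2)) :=
        log_le_log (Nat.cast_pos.2 (Int.natAbs_pos.2 hΔ)) hdiscr
    _ = 2 * Fintype.card ι ^ 2 * (log (max 1 c₁) + A * log x) := by
        rw [log_pow, log_mul (by positivity) (by positivity), log_pow]
        push_cast
        ring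
    _ ≤ 2 * Fintype.card ι ^ 2 * (log (max 1 c₁) * log x + A * log x) := by
        gcongr
        exact le_mul_of_one_le_right (log_nonneg hc₁) hlogx
    _ = 2 * Fintype.card ι ^ 2 * (log (max 1 c₁) + A) * log x := by ring

variable {p : ℕ}

lemma intCast_ne_zero_of_not_dvd_linearFormsDiscr (hp : p.Prime)
    (hΔ : ¬(p : ℤ) ∣ linearFormsDiscr e d) :
    (∀ i, (e i : ZMod p) ≠ 0) ∧ ∀ i j, j ≠ i → (e i * d j - e j * d i : ZMod p) ≠ 0 := by
  have : Fact p.Prime := ⟨hp⟩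
  rw [← ZMod.intCast_zmod_eq_zero_iff_dvd, linearFormsDiscr] at hΔ
  push_cast at hΔ
  obtain ⟨he, hed⟩ := mul_ne_zero_iff.1 hΔ
  exact ⟨fun i => prod_ne_zero_iff.1 he i (mem_univ i), fun i j hji =>
    prod_ne_zero_iff.1 (prod_ne_zero_iff.1 hed i (mem_univ i)) j
      (mem_filter.2 ⟨mem_univ j, hji⟩)⟩

lemma card_rootClasses (hp : p.Prime) (hΔ : ¬(p : ℤ) ∣ linearFormsDiscr e d) :
    #(rootClasses e d p) = Fintype.card ι := by
  have : Fact p.Prime := ⟨hp⟩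
  obtain ⟨he, hed⟩ := intCast_ne_zero_of_not_dvd_linearFormsDiscr hp hΔ
  rw [rootClasses, card_image_of_injective, card_univ]
  intro i j hij
  by_contra hne
  refine hed i j (Ne.symm hne) ?_
  simp only [← div_eq_mul_inv] at hij
  rw [div_eq_div_iff (he i) (he j)] at hij
  linear_combination hij

lemma dvd_prod_of_mem_rootClasses (hp : p.Prime) (hΔ : ¬(p : ℤ) ∣ linearFormsDiscr e d) {n : ℕ}
    (hn : (n : ZMod p) ∈ rootClasses e d p) : (p : ℤ) ∣ ∏ i, (e i * (n : ℤ) + d i) := by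
  have : Fact p.Prime := ⟨hp⟩
  obtain ⟨i, -, hi⟩ := mem_image.1 hn
  have hei := (intCast_ne_zero_of_not_dvd_linearFormsDiscr hp hΔ).1 i
  refine dvd_trans ?_ (dvd_prod_of_mem _ (mem_univ i))
  rw [← ZMod.intCast_zmod_eq_zero_iff_dvd]
  push_cast
  rw [← hi]
  field_simp
  ring

lemma one_add_pow_le_inv_one_sub_mul {x : ℝ} {m : ℕ} (hx : 0 ≤ x) (hmx : m * x < 1) :
    (1 + x) ^ m ≤ (1 - m * x)⁻¹ :=
  calc (1 + x) ^ m ≤ exp x ^ m :=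
        pow_le_pow_left₀ (by positivity) (by linarith [add_one_le_exp x]) m
    _ = (exp (-(m * x)))⁻¹ := by rw [← exp_nat_mul, exp_neg, inv_inv]
    _ ≤ (1 - m * x)⁻¹ := inv_anti₀ (sub_pos.2 hmx) (one_sub_le_exp_neg _)

lemma natCast_notMem_rootClasses (hp : p.Prime) (hΔ : ¬(p : ℤ) ∣ linearFormsDiscr e d) {n M : ℕ}
    (hpM : p ∣ M) (hn : Int.gcd (∏ i, (e i * (n : ℤ) + d i)) M = 1) :
    (n : ZMod p) ∉ rootClasses e d p := fun hnp => by
  have hdvd := Int.dvd_coe_gcd (dvd_prod_of_mem_rootClasses hp hΔ hnp)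
    (Int.natCast_dvd_natCast.2 hpM)
  rw [hn] at hdvd
  exact hp.not_dvd_one (Int.natCast_dvd_natCast.1 hdvd)

lemma one_add_inv_pow_le_inv_one_sub_card_rootClasses_div (hp : p.Prime)
    (hΔ : ¬(p : ℤ) ∣ linearFormsDiscr e d) (hpι : Fintype.card ι < p) :
    (1 + (p : ℝ)⁻¹) ^ Fintype.card ι ≤ (1 - #(rootClasses e d p) / p : ℝ)⁻¹ := by
  have hpι' : (Fintype.card ι : ℝ) < p := by exact_mod_cast hpι
  rw [card_rootClasses hp hΔ, div_eq_mul_inv]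
  refine one_add_pow_le_inv_one_sub_mul (by positivity) ?_
  rwa [← div_eq_mul_inv, div_lt_one (by exact_mod_cast hp.pos)]

variable {z : ℕ} {P : Finset ℕ}

lemma sum_card_rootClasses_div_mul_log_le (hPz : P ⊆ Nat.primesLE z)
    (hPΔ : ∀ p ∈ P, ¬(p : ℤ) ∣ linearFormsDiscr e d) :
    ∑ p ∈ P, #(rootClasses e d p) / p * log p ≤ 2 * Fintype.card ι * log z :=
  calc ∑ p ∈ P, #(rootClasses e d p) / p * log p
      = Fintype.card ι * ∑ p ∈ P, log p / p := by
        rw [mul_sum]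
        refine sum_congr rfl fun p hp => ?_
        rw [card_rootClasses (Nat.prime_of_mem_primesLE (hPz hp)) (hPΔ p hp)]
        ring
    _ ≤ Fintype.card ι * ∑ p ∈ Nat.primesLE z, log p / p := by gcongr
    _ ≤ Fintype.card ι * (2 * log z) := by gcongr; exact sum_primesLE_log_div_le z
    _ = 2 * Fintype.card ι * log z := by ring

theorem card_filter_gcd_mul_prod_pow_le {N M : ℕ} (hN : 2 ≤ N)
    (hz : 16 * Fintype.card ι * log z ≤ log N) (hPz : P ⊆ Nat.primesLE z)
    (hPM : ∀ p ∈ P, p ∣ M) (hPι : ∀ p ∈ P, 2 * Fintype.card ι ≤ p)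
    (hPΔ : ∀ p ∈ P, ¬(p : ℤ) ∣ linearFormsDiscr e d) :
    #((Icc 1 N).filter fun n : ℕ => Int.gcd (∏ i, (e i * (n : ℤ) + d i)) M = 1) *
      (∏ p ∈ P, (1 + (p : ℝ)⁻¹)) ^ Fintype.card ι ≤ 8 * N := by
  set X := (Icc 1 N).filter fun n : ℕ => Int.gcd (∏ i, (e i * (n : ℤ) + d i)) M = 1
  have hprime : ∀ p ∈ P, p.Prime := fun p hp => Nat.prime_of_mem_primesLE (hPz hp)
  have hN' : (1 : ℝ) < N := by exact_mod_cast hN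
  set Q : ℝ := (N : ℝ) ^ (1 / 4 : ℝ)
  have hQ : 1 < Q := one_lt_rpow hN' (by norm_num)
  have hQ4 : Q ^ 4 = N := by
    rw [← rpow_natCast, ← rpow_mul (by positivity)]
    norm_num
  have hQ_le : Q ≤ Q ^ 4 := le_self_pow₀ hQ.le four_ne_zero
  have hmean : ∑ p ∈ P, #(rootClasses e d p) / p * log p ≤ log Q / 2 :=
    (sum_card_rootClasses_div_mul_log_le hPz hPΔ).trans
      (by rw [log_rpow (by positivity)]; linarith)
  have hsub : X ⊆ range (N + 1) := fun n hn =>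
    mem_range.2 (Nat.lt_succ_of_le (mem_Icc.1 (mem_filter.1 hn).1).2)
  calc #X * (∏ p ∈ P, (1 + (p : ℝ)⁻¹)) ^ Fintype.card ι
      ≤ #X * ∏ p ∈ P, (1 - #(rootClasses e d p) / p : ℝ)⁻¹ := by
        rw [← prod_pow]
        gcongr with p hp
        have hp2 := (hprime p hp).two_le
        have hpι := hPι p hp
        exact one_add_inv_pow_le_inv_one_sub_card_rootClasses_div (hprime p hp) (hPΔ p hp)
          (by lia)
    _ ≤ 2 * ((N + 1 : ℕ) + Q + Q ^ 4) :=
        card_mul_prod_inv_le hprime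
          (fun p hp => (card_rootClasses (hprime p hp) (hPΔ p hp)).symm ▸ hPι p hp) hQ hmean hsub
          fun n hn p hp => natCast_notMem_rootClasses (hprime p hp) (hPΔ p hp) (hPM p hp)
            (mem_filter.1 hn).2
    _ ≤ 8 * N := by
        rw [hQ4] at hQ_le ⊢
        push_cast
        linarith

end LinearForms

section Parameters

lemma log_floor_rpow_le {x k : ℝ} (hx : 1 ≤ x) (hk : 0 ≤ k) : log ⌊x ^ k⌋₊ ≤ k * log x := by
  have hxk : 1 ≤ x ^ k := one_le_rpow hx hk
  rw [← log_rpow (by positivity)]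
  exact log_le_log (Nat.cast_pos.2 (Nat.floor_pos.2 hxk)) (Nat.floor_le (by positivity))

lemma mul_log_le_log_floor_rpow_add_one {x : ℝ} (hx : 0 < x) (k : ℝ) :
    k * log x ≤ log (⌊x ^ k⌋₊ + 1) := by
  rw [← log_rpow hx]
  exact log_le_log (rpow_pos_of_pos hx k) (Nat.lt_floor_add_one _).le

lemma one_le_log {x : ℝ} (hx : 16 ≤ x) : 1 ≤ log x := by
  have hexp := exp_one_lt_d9
  rw [le_log_iff_exp_le (by linarith)]
  linarith

lemma one_le_log_log {x : ℝ} (hx : 16 ≤ x) : 1 ≤ log (log x) := by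
  have hlog : 4 * log 2 ≤ log x :=
    calc 4 * log 2 = log (2 ^ 4) := by rw [log_pow]; norm_num
      _ ≤ log x := log_le_log (by norm_num) (by linarith)
  have hlog2 := log_two_gt_d9
  have hexp := exp_one_lt_d9
  rw [le_log_iff_exp_le (by linarith)]
  linarith

lemma dvd_primor {p : ℕ} (hp : p.Prime) {z : ℝ} (hpz : p ≤ ⌊z⌋₊) : p ∣ primor z :=
  dvd_prod_of_mem (fun q => q) (mem_filter.2 ⟨mem_range.2 (Nat.lt_succ_of_le hpz), hp⟩)

lemma log_add_one_le_mul_log_log_mul_prod {D K : ℕ} {x C : ℝ} (hD : D ≠ 0) (hK : 2 ≤ K)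
    (hx : 16 ≤ x) (hDC : log D ≤ C * log x) (z : ℕ) :
    log (z + 1) ≤ 4 * (5 + 4 * log K) * exp (C / log 2) * log (log x) *
      ∏ p ∈ Nat.primesLE z with K * ⌊log x⌋₊ < p ∧ ¬p ∣ D, (1 + (p : ℝ)⁻¹) := by
  have hloglog := one_le_log_log hx
  have hlog := one_le_log hx
  have hK' : (2 : ℝ) ≤ K := by exact_mod_cast hK
  have hfloor : 1 ≤ ⌊log x⌋₊ := Nat.floor_pos.2 hlog
  have hfloor' : (1 : ℝ) ≤ ⌊log x⌋₊ := by exact_mod_cast hfloor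
  have hlogK : 0 ≤ log K := log_natCast_nonneg K
  have hlog_le : log x ≤ (K * ⌊log x⌋₊ : ℕ) := by
    have hlt := Nat.lt_floor_add_one (log x)
    push_cast
    nlinarith
  have hlog_y : 1 + 4 * log (K * ⌊log x⌋₊ : ℕ) ≤ (5 + 4 * log K) * log (log x) := by
    rw [Nat.cast_mul, log_mul (by positivity) (by positivity)]
    have hle : log ⌊log x⌋₊ ≤ log (log x) :=
      log_le_log (by positivity) (Nat.floor_le (by positivity))
    nlinarith
  have hexp : log D / ((K * ⌊log x⌋₊ : ℕ) * log 2) ≤ C / log 2 := by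
    rw [← div_div]
    gcongr
    calc log D / (K * ⌊log x⌋₊ : ℕ) ≤ log D / log x := by
          have := log_natCast_nonneg D
          gcongr
      _ ≤ C := (div_le_iff₀ (by positivity)).2 hDC
  refine (log_add_one_le_mul_prod_primesLE_not_dvd hD (hK.trans
    (Nat.le_mul_of_pos_right K hfloor)) z).trans ?_
  refine mul_le_mul_of_nonneg_right ?_ (prod_nonneg fun p _ => by positivity)
  calc 4 * (1 + 4 * log (K * ⌊log x⌋₊ : ℕ)) * exp (log D / ((K * ⌊log x⌋₊ : ℕ) * log 2))
      ≤ 4 * ((5 + 4 * log K) * log (log x)) * exp (C / log 2) := by gcongr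
    _ = 4 * (5 + 4 * log K) * exp (C / log 2) * log (log x) := by ring

lemma card_filter_gcd_primor_mul_prod_pow_le {ι : Type*} [Fintype ι] [DecidableEq ι]
    (e d : ι → ℤ) {N : ℕ} {c k : ℝ} (hN : 16 ≤ N) (hk : 0 ≤ k) (hkc : k ≤ c)
    (hkι : 16 * Fintype.card ι * k ≤ 1) :
    #((Icc 1 N).filter fun n : ℕ =>
        Int.gcd (∏ i, (e i * (n : ℤ) + d i)) (primor ((N : ℝ) ^ c)) = 1) *
      (∏ p ∈ Nat.primesLE ⌊(N : ℝ) ^ k⌋₊ with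
        2 * (Fintype.card ι + 1) * ⌊log N⌋₊ < p ∧ ¬p ∣ (linearFormsDiscr e d).natAbs,
          (1 + (p : ℝ)⁻¹)) ^ Fintype.card ι ≤ 8 * N := by
  have hN16 : (16 : ℝ) ≤ N := by exact_mod_cast hN
  have hN1 : (1 : ℝ) ≤ N := by linarith
  have hlog := one_le_log hN16
  have hlogz : 16 * Fintype.card ι * log ⌊(N : ℝ) ^ k⌋₊ ≤ log N :=
    calc 16 * Fintype.card ι * log ⌊(N : ℝ) ^ k⌋₊
        ≤ 16 * Fintype.card ι * (k * log N) := by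
          gcongr
          exact log_floor_rpow_le hN1 hk
      _ = 16 * Fintype.card ι * k * log N := by ring
      _ ≤ log N := mul_le_of_le_one_left (by linarith) hkι
  refine card_filter_gcd_mul_prod_pow_le (by lia) hlogz (filter_subset _ _)
    (fun p hp => ?_) (fun p hp => ?_) fun p hp => ?_
  all_goals obtain ⟨hpz, hKp, hpΔ⟩ := mem_filter.1 hp
  · exact dvd_primor (Nat.prime_of_mem_primesLE hpz) ((Nat.le_of_mem_primesLE hpz).trans
      (Nat.floor_mono (rpow_le_rpow_of_exponent_le hN1 hkc)))
  · have := Nat.le_mul_of_pos_right (2 * (Fintype.card ι + 1)) (Nat.floor_pos.2 hlog)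
    lia
  · rwa [Int.natCast_dvd]

end Parameters

theorem stmt2_general {ι : Type*} [Fintype ι] [DecidableEq ι] (c₁ : ℝ) {c : ℝ} (hc : 0 < c)
    (A : ℕ) :
    ∃ c₂ : ℝ, 0 < c₂ ∧ ∀ N : ℕ, 16 ≤ N → ∀ e d : ι → ℤ,
      (∀ i, |(e i : ℝ)| + |(d i : ℝ)| ≤ c₁ * (N : ℝ) ^ A) → linearFormsDiscr e d ≠ 0 →
      (#((Icc 1 N).filter fun n : ℕ =>
          Int.gcd (∏ i, (e i * (n : ℤ) + d i)) (primor ((N : ℝ) ^ c)) = 1) : ℝ) ≤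
        c₂ * N * log (log N) ^ Fintype.card ι / log N ^ Fintype.card ι := by
  set m := Fintype.card ι
  set K := 2 * (m + 1)
  set k := min c (1 / (16 * (m + 1)))
  set H := 4 * (5 + 4 * log K) * exp (2 * m ^ 2 * (log (max 1 c₁) + A) / log 2)
  have hk : 0 < k := lt_min hc (by positivity)
  have hH : 0 < H := by
    have := log_natCast_nonneg K
    positivity
  refine ⟨8 * (H / k) ^ m, by positivity, fun N hN e d hed hΔ => ?_⟩
  set X := (Icc 1 N).filter fun n : ℕ =>
    Int.gcd (∏ i, (e i * (n : ℤ) + d i)) (primor ((N : ℝ) ^ c)) = 1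
  have hN16 : (16 : ℝ) ≤ N := by exact_mod_cast hN
  have hN1 : (1 : ℝ) ≤ N := by linarith
  have hloglog : 1 ≤ log (log N) := one_le_log_log hN16
  have hlog : 1 ≤ log N := one_le_log hN16
  set z := ⌊(N : ℝ) ^ k⌋₊
  set P := {p ∈ Nat.primesLE z | K * ⌊log N⌋₊ < p ∧ ¬p ∣ (linearFormsDiscr e d).natAbs}
  set V := ∏ p ∈ P, (1 + (p : ℝ)⁻¹)
  have hV : k * log N ≤ H * log (log N) * V :=
    (mul_log_le_log_floor_rpow_add_one (by linarith) k).trans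
      (log_add_one_le_mul_log_log_mul_prod (Int.natAbs_ne_zero.2 hΔ) (by lia) hN16
        (log_natAbs_linearFormsDiscr_le hΔ hN1 hlog hed) z)
  have hXV : #X * V ^ m ≤ 8 * N := by
    refine card_filter_gcd_primor_mul_prod_pow_le e d hN hk.le (min_le_left _ _) ?_
    calc 16 * m * k ≤ 16 * m * (1 / (16 * (m + 1))) := by gcongr; exact min_le_right _ _
      _ ≤ 1 := by field_simp; linarith
  rw [le_div_iff₀ (by positivity)]
  calc #X * log N ^ m = #X * (k * log N) ^ m / k ^ m := by rw [mul_pow]; field_simp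
    _ ≤ #X * (H * log (log N) * V) ^ m / k ^ m := by gcongr
    _ = (H / k) ^ m * log (log N) ^ m * (#X * V ^ m) := by
        rw [mul_pow, mul_pow, div_pow]
        ring
    _ ≤ (H / k) ^ m * log (log N) ^ m * (8 * N) := by gcongr
    _ = 8 * (H / k) ^ m * N * log (log N) ^ m := by ring

theorem stmt2
    (m : ℕ) (hm : 1 ≤ m) (c₁ c : ℝ) (hc₁ : 0 < c₁) (hc : 0 < c) (hc' : c < 1) :
    ∃ c₂ : ℝ, 0 < c₂ ∧
      ∀ N' : ℕ, 16 ≤ N' →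
        ∀ e d : Fin m → ℤ,
          (∀ i, |(e i : ℝ)| + |(d i : ℝ)| ≤ c₁ * (N' : ℝ) ^ (100 : ℕ)) →
          (∏ i, e i) *
            ∏ i, ∏ j ∈ Finset.univ.filter (fun j => j ≠ i),
              (e i * d j - e j * d i) ≠ 0 →
          (((Finset.Icc 1 N').filter (fun n : ℕ =>
              Int.gcd (∏ i, (e i * (n : ℤ) + d i)) (primor ((N' : ℝ) ^ c)) = 1)).card : ℝ)
            ≤ c₂ * (N' : ℝ) * (Real.log (Real.log N')) ^ m / (Real.log N') ^ m := by
  simpa only [Fintype.card_fin, linearFormsDiscr] using stmt2_general (ι := Fin m) c₁ hc 100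
end
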